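/- arXiv:1205.3575 — 6 statements merged into one kernel-verified Lean document; each statement's English description precedes it below -/
import Mathlib

section
/- Let N ≥ 1 and let θ₁,…,θ_N ∈ ℝ be such that {π, θ₁,…,θ_N} is linearly independent over ℚ. Then the linear operator T on ℝ^{2N} given by the block-diagonal matrix diag(R_{θ₁},…,R_{θ_N}), where R_θ is the rotation of angle θ acting on ℝ², is N-supercyclic: there exists an N-dimensional subspace E of ℝ^{2N} such that the union of the sets T^k(E) over k ∈ ℕ is dense in ℝ^{2N}. -/
/-!
The orbit of the rotation vector `(θᵢ / 2π)ᵢ` in the torus `(ℝ/ℤ)ᴺ` is dense (`kronecker_dense`).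
This is Kronecker's theorem, obtained here by Weyl's argument: along the orbit the averages of a
nontrivial character are geometric sums tending to `0`, its Haar integral (`tendsto_average_span`).
Trigonometric polynomials are uniformly dense in the continuous functions, so an orbit missing a
nonempty open set would force a nonnegative bump function supported there to have zero integral.
The rational independence of `π, θ₁, …, θ_N` says precisely that no nontrivial character is trivial
on the rotation vector (`mFourier_ne_one`).

Now let `E` be the product of the first coordinate axes of the `N` planes. A vector `w` has polar
coordinates `(rᵢ, φᵢ)` in the planes, and `T^k` sends `(rᵢ, 0)ᵢ ∈ E` to the point with polar
coordinates `(rᵢ, k θᵢ)`. By Kronecker's theorem these points accumulate at `w`.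
-/

open Matrix

/-- The 2×2 rotation matrix of angle `θ`. -/
noncomputable def rotM (θ : ℝ) : Matrix (Fin 2) (Fin 2) ℝ :=
  !![Real.cos θ, -Real.sin θ; Real.sin θ, Real.cos θ]

/-- A linear operator `T` on `ι → ℝ` is `n`-supercyclic if there is an `n`-dimensional
subspace `E` whose orbit `⋃ k, T^k(E)` is dense. -/
def NSupercyclic {ι : Type*} [Fintype ι] (n : ℕ) (T : (ι → ℝ) →ₗ[ℝ] (ι → ℝ)) : Prop :=
  ∃ E : Submodule ℝ (ι → ℝ), Module.finrank ℝ E = n ∧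
    Dense (⋃ k : ℕ, ⇑(T ^ k) '' (E : Set (ι → ℝ)))

open MeasureTheory Filter Topology UnitAddTorus

/-- The normalized Haar measure on the torus `(ℝ/ℤ)^d`. -/
noncomputable def torusHaar (d : Type*) [Fintype d] : Measure (UnitAddTorus d) :=
  Measure.pi fun _ => AddCircle.haarAddCircle

instance (d : Type*) [Fintype d] : (torusHaar d).IsAddHaarMeasure := by
  unfold torusHaar; infer_instance

instance (d : Type*) [Fintype d] : IsProbabilityMeasure (torusHaar d) := by
  unfold torusHaar; infer_instance

section Kronecker

variable {d : Type*} [Fintype d]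

lemma mFourier_apply_add (n : d → ℤ) (x y : UnitAddTorus d) :
    mFourier n (x + y) = mFourier n x * mFourier n y := by
  simp [mFourier, fourier_apply, smul_add, AddCircle.toCircle_add, Finset.prod_mul_distrib]

lemma mFourier_apply_nsmul (n : d → ℤ) (x : UnitAddTorus d) (k : ℕ) :
    mFourier n (k • x) = mFourier n x ^ k := by
  induction k with
  | zero => simp [mFourier, fourier_apply]
  | succ k ih => rw [succ_nsmul, mFourier_apply_add, ih, pow_succ]

lemma norm_mFourier_apply (n : d → ℤ) (x : UnitAddTorus d) : ‖mFourier n x‖ = 1 := by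
  simp only [mFourier, ContinuousMap.coe_mk, fourier_apply, norm_prod, Circle.norm_coe,
    Finset.prod_const_one]

/-- A character that is nontrivial at some point has zero Haar integral, by translation
invariance. -/
lemma integral_mFourier_eq_zero (n : d → ℤ) (a : UnitAddTorus d) (ha : mFourier n a ≠ 1) :
    ∫ x, mFourier n x ∂(torusHaar d) = 0 := by
  have h := integral_add_right_eq_self (μ := torusHaar d) (fun x => mFourier n x) a
  simp only [mFourier_apply_add, integral_mul_const] at h
  by_contra h0
  exact ha (mul_left_cancel₀ h0 (by rw [h, mul_one]))

/-- A point of the unit circle other than `1` has powers averaging to `0`. -/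
lemma tendsto_average_pow (z : ℂ) (hz : ‖z‖ = 1) (h1 : z ≠ 1) :
    Tendsto (fun K : ℕ => (K : ℂ)⁻¹ * ∑ k ∈ Finset.range K, z ^ k) atTop (𝓝 0) := by
  have hinv : Tendsto (fun K : ℕ => (K : ℝ)⁻¹ * (2 / ‖z - 1‖)) atTop (𝓝 0) := by
    simpa using (tendsto_inv_atTop_nhds_zero_nat (𝕜 := ℝ)).mul_const (2 / ‖z - 1‖)
  refine squeeze_zero_norm (fun K => ?_) hinv
  rw [geom_sum_eq h1, norm_mul, norm_inv, norm_div, Complex.norm_natCast]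
  gcongr
  calc ‖z ^ K - 1‖ ≤ ‖z ^ K‖ + ‖(1 : ℂ)‖ := norm_sub_le _ _
    _ = 2 := by rw [norm_pow, hz]; norm_num

/-- Weyl's equidistribution for trigonometric polynomials. -/
lemma tendsto_average_span (a : UnitAddTorus d) (ha : ∀ n : d → ℤ, n ≠ 0 → mFourier n a ≠ 1)
    (p : C(UnitAddTorus d, ℂ)) (hp : p ∈ Submodule.span ℂ (Set.range (mFourier (d := d)))) :
    Tendsto (fun K : ℕ => (K : ℂ)⁻¹ * ∑ k ∈ Finset.range K, p (k • a)) atTop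
      (𝓝 (∫ x, p x ∂(torusHaar d))) := by
  have hint : ∀ f : C(UnitAddTorus d, ℂ), Integrable (fun x => f x) (torusHaar d) := fun f =>
    f.continuous.integrable_of_hasCompactSupport (HasCompactSupport.of_compactSpace _)
  induction hp using Submodule.span_induction with
  | mem f hf =>
    obtain ⟨n, rfl⟩ := hf
    by_cases hn : n = 0
    · subst hn
      simp only [mFourier_zero, ContinuousMap.one_apply, integral_const, probReal_univ, one_smul]
      refine tendsto_const_nhds.congr' ?_
      filter_upwards [eventually_ge_atTop 1] with K hK
      have : (K : ℂ) ≠ 0 := by exact_mod_cast (by omega : K ≠ 0)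
      simp [this]
    · rw [integral_mFourier_eq_zero n a (ha n hn)]
      simp only [mFourier_apply_nsmul]
      exact tendsto_average_pow _ (norm_mFourier_apply n a) (ha n hn)
  | zero => simp
  | add f g _ _ hf hg =>
    simp only [ContinuousMap.add_apply, Finset.sum_add_distrib, mul_add]
    rw [integral_add (hint f) (hint g)]
    exact hf.add hg
  | smul c f _ hf =>
    simp only [ContinuousMap.smul_apply, smul_eq_mul, ← Finset.mul_sum]
    rw [integral_const_mul]
    simpa only [mul_left_comm] using hf.const_mul c

/-- **Kronecker's theorem**: if no nontrivial character of the torus is trivial at `a`, then the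
forward orbit of `0` under translation by `a` is dense. -/
theorem kronecker_dense (a : UnitAddTorus d) (ha : ∀ n : d → ℤ, n ≠ 0 → mFourier n a ≠ 1) :
    DenseRange (fun k : ℕ => k • a) := by
  by_contra hd
  obtain ⟨x, hx⟩ : ∃ x, x ∉ closure (Set.range fun k : ℕ => k • a) := by
    simpa [DenseRange, Dense] using hd
  obtain ⟨f, hf1, hf0, -, hf01⟩ := exists_continuous_one_zero_of_isCompact
    (isCompact_singleton (x := x)) (isClosed_closure (s := Set.range fun k : ℕ => k • a))
    (Set.disjoint_singleton_left.2 hx)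
  set c : ℝ := ∫ y, f y ∂(torusHaar d) with hc
  have hcpos : 0 < c := by
    refine f.continuous.integral_pos_of_hasCompactSupport_nonneg_nonzero
      (HasCompactSupport.of_compactSpace _) (fun y => (hf01 y).1) (x := x) ?_
    rw [hf1 rfl]; simp
  let F : C(UnitAddTorus d, ℂ) := ⟨fun y => (f y : ℂ), by fun_prop⟩
  have hFc : ∫ y, F y ∂(torusHaar d) = (c : ℂ) := integral_ofReal
  have hF : F ∈ closure (Submodule.span ℂ (Set.range (mFourier (d := d))) :
      Set C(UnitAddTorus d, ℂ)) := by
    rw [← Submodule.topologicalClosure_coe, span_mFourier_closure_eq_top]; trivial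
  obtain ⟨p, hp, hFp⟩ := Metric.mem_closure_iff.1 hF (c / 2) (by linarith)
  rw [dist_eq_norm] at hFp
  have hpt : ∀ y, ‖F y - p y‖ ≤ ‖F - p‖ := fun y => (F - p).norm_coe_le_norm y
  -- `F` vanishes on the orbit, so the averages of `p` stay within `‖F - p‖` of zero.
  have hp_int : ‖∫ y, p y ∂(torusHaar d)‖ ≤ ‖F - p‖ := by
    refine le_of_tendsto (tendsto_average_span a ha p hp).norm ?_
    filter_upwards [eventually_ge_atTop 1] with K hK
    have hK0 : (0 : ℝ) < K := by exact_mod_cast hK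
    rw [norm_mul, norm_inv, Complex.norm_natCast, inv_mul_le_iff₀ hK0]
    refine (norm_sum_le_of_le _ (fun k _ => ?_)).trans
      (b := ∑ k ∈ Finset.range K, ‖F - p‖) (by simp)
    have h0 : F (k • a) = 0 := by
      have : f (k • a) = 0 := hf0 (subset_closure ⟨k, rfl⟩)
      simp [F, this]
    simpa [h0] using hpt (k • a)
  have hint : ∀ g : C(UnitAddTorus d, ℂ), Integrable (fun x => g x) (torusHaar d) := fun g =>
    g.continuous.integrable_of_hasCompactSupport (HasCompactSupport.of_compactSpace _)
  have hdiff : ‖(∫ y, F y ∂(torusHaar d)) - ∫ y, p y ∂(torusHaar d)‖ ≤ ‖F - p‖ := by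
    rw [← integral_sub (hint F) (hint p)]
    simpa using norm_integral_le_of_norm_le_const (μ := torusHaar d)
      (Eventually.of_forall hpt)
  have hcn : ‖(c : ℂ)‖ = c := by simp [abs_of_pos hcpos]
  have := norm_le_norm_sub_add (c : ℂ) (∫ y, p y ∂(torusHaar d))
  rw [hFc] at hdiff
  linarith

end Kronecker

/-- Rational independence of `π, θ₁, …, θ_N` means that no nontrivial character is trivial at
`(θᵢ / 2π)ᵢ`. -/
lemma mFourier_ne_one {N : ℕ} (θ : Fin N → ℝ)
    (hθ : LinearIndependent ℚ (Fin.cons Real.pi θ : Fin (N + 1) → ℝ))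
    (n : Fin N → ℤ) (hn : n ≠ 0) :
    mFourier n (fun i => ((θ i / (2 * Real.pi) : ℝ) : UnitAddCircle)) ≠ 1 := by
  intro h
  have hpi : (Real.pi : ℂ) ≠ 0 := by exact_mod_cast Real.pi_ne_zero
  have h1 : Complex.exp (((∑ i, n i * θ i : ℝ) : ℂ) * Complex.I) = 1 := by
    rw [← h]
    simp only [mFourier, ContinuousMap.coe_mk, fourier_coe_apply, ← Complex.exp_sum]
    congr 1
    push_cast
    rw [Finset.sum_mul]
    refine Finset.sum_congr rfl fun i _ => ?_
    field_simp
  obtain ⟨m, hm⟩ := Complex.exp_eq_one_iff.1 h1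
  have h2 : (∑ i, n i * θ i : ℝ) = m * (2 * Real.pi) := by
    have : ((∑ i, n i * θ i : ℝ) : ℂ) = ((m * (2 * Real.pi) : ℝ) : ℂ) := by
      apply mul_right_cancel₀ Complex.I_ne_zero
      rw [hm]; push_cast; ring
    exact_mod_cast this
  have h3 := Fintype.linearIndependent_iff.1 hθ
    (Fin.cons (-(2 * m : ℚ)) fun i => (n i : ℚ)) (by
      rw [Fin.sum_univ_succ]
      simp only [Fin.cons_zero, Fin.cons_succ, Rat.smul_def]
      push_cast
      rw [h2]; ring)
  apply hn
  funext i
  simpa using h3 i.succ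

lemma rotM_pow (θ : ℝ) (k : ℕ) : rotM θ ^ k = rotM (k * θ) := by
  induction k with
  | zero => ext i j; fin_cases i <;> fin_cases j <;> simp [rotM]
  | succ k ih =>
    rw [pow_succ, ih]
    push_cast
    ext i j
    fin_cases i <;> fin_cases j <;>
      simp [rotM, Matrix.mul_apply, Fin.sum_univ_two, add_mul, Real.cos_add, Real.sin_add] <;> ring

/-- The vector of `ℝ^{2N}` lying on the first axis of each plane, with prescribed coordinates
there. -/
def axisMap (N : ℕ) : (Fin N → ℝ) →ₗ[ℝ] (Fin 2 × Fin N → ℝ) where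
  toFun r := fun x => if x.1 = 0 then r x.2 else 0
  map_add' r s := by ext x; by_cases h : x.1 = 0 <;> simp [h]
  map_smul' c r := by ext x; by_cases h : x.1 = 0 <;> simp [h]

lemma axisMap_injective (N : ℕ) : Function.Injective (axisMap N) := by
  intro r s h
  funext i
  simpa [axisMap] using congrFun h (0, i)

/-- The torus of points at distance `|rᵢ|` from the origin in the `i`-th plane, parametrized by
angles in units of a full turn. -/
noncomputable def planesMap {N : ℕ} (r : Fin N → ℝ) (t : UnitAddTorus (Fin N)) :
    Fin 2 × Fin N → ℝ :=
  fun x => r x.2 * if x.1 = 0 then ((t x.2).toCircle : ℂ).re else ((t x.2).toCircle : ℂ).im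

lemma continuous_planesMap {N : ℕ} (r : Fin N → ℝ) : Continuous (planesMap r) := by
  have hc : ∀ i : Fin N, Continuous fun t : UnitAddTorus (Fin N) => ((t i).toCircle : ℂ) :=
    fun i => continuous_subtype_val.comp (AddCircle.continuous_toCircle.comp (continuous_apply i))
  refine continuous_pi fun x => continuous_const.mul ?_
  split_ifs
  · exact Complex.continuous_re.comp (hc x.2)
  · exact Complex.continuous_im.comp (hc x.2)

lemma planesMap_coe {N : ℕ} (r φ : Fin N → ℝ) :
    planesMap r (fun i => ((φ i / (2 * Real.pi) : ℝ) : UnitAddCircle)) =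
      fun x => r x.2 * if x.1 = 0 then Real.cos (φ x.2) else Real.sin (φ x.2) := by
  funext x
  have : 2 * Real.pi / 1 * (φ x.2 / (2 * Real.pi)) = φ x.2 := by
    field_simp
  simp only [planesMap, AddCircle.toCircle_apply_mk, this, Circle.coe_exp,
    Complex.exp_ofReal_mul_I_re, Complex.exp_ofReal_mul_I_im]

/-- `T^k` moves a point of the axes to angles `k θᵢ`. -/
lemma pow_axisMap {N : ℕ} (θ r : Fin N → ℝ) (k : ℕ) :
    ((Matrix.blockDiagonal fun i : Fin N => rotM (θ i)).mulVecLin ^ k) (axisMap N r) =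
      planesMap r (k • fun i => ((θ i / (2 * Real.pi) : ℝ) : UnitAddCircle)) := by
  have hk : (k • fun i => ((θ i / (2 * Real.pi) : ℝ) : UnitAddCircle)) =
      fun i => (((k * θ i) / (2 * Real.pi) : ℝ) : UnitAddCircle) := by
    funext i
    rw [Pi.smul_apply, ← AddCircle.coe_nsmul, nsmul_eq_mul, mul_div_assoc]
  have hM : (Matrix.blockDiagonal fun i : Fin N => rotM (θ i)) ^ k =
      Matrix.blockDiagonal fun i : Fin N => rotM (k * θ i) := by
    rw [← Matrix.blockDiagonal_pow]
    congr 1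
    funext i
    exact rotM_pow (θ i) k
  rw [hk, planesMap_coe, ← Matrix.toLin'_apply', ← Matrix.toLin'_pow, hM, Matrix.toLin'_apply]
  funext ⟨j, i⟩
  simp only [Matrix.mulVec, dotProduct, Fintype.sum_prod_type, Fin.sum_univ_two,
    Matrix.blockDiagonal_apply', axisMap, LinearMap.coe_mk, AddHom.coe_mk]
  fin_cases j <;> simp [rotM, mul_comm]

theorem stmt3 (N : ℕ) (hN : 1 ≤ N) (θ : Fin N → ℝ)
    (hθ : LinearIndependent ℚ (Fin.cons Real.pi θ : Fin (N + 1) → ℝ)) :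
    NSupercyclic N (Matrix.blockDiagonal fun i : Fin N => rotM (θ i)).mulVecLin := by
  refine ⟨LinearMap.range (axisMap N), ?_, fun w => ?_⟩
  · rw [LinearMap.finrank_range_of_inj (axisMap_injective N), Module.finrank_fin_fun]
  -- Polar coordinates of `w` in each of the planes.
  let z : Fin N → ℂ := fun i => ⟨w (0, i), w (1, i)⟩
  have hw : w = planesMap (fun i => ‖z i‖)
      (fun i => (((z i).arg / (2 * Real.pi) : ℝ) : UnitAddCircle)) := by
    rw [planesMap_coe]
    funext ⟨j, i⟩
    fin_cases j
    · exact (Complex.norm_mul_cos_arg (z i)).symm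
    · exact (Complex.norm_mul_sin_arg (z i)).symm
  rw [hw]
  have hd := kronecker_dense _ (mFourier_ne_one θ hθ)
  refine closure_mono ?_ (image_closure_subset_closure_image (continuous_planesMap _)
    ⟨_, hd _, rfl⟩)
  rintro _ ⟨_, ⟨k, rfl⟩, rfl⟩
  exact Set.mem_iUnion.2 ⟨k, _, ⟨_, rfl⟩, pow_axisMap θ _ k⟩
end

section
/- Let N ≥ 1 and let θ₁,…,θ_N ∈ ℝ be such that {π, θ₁,…,θ_N} is linearly independent over ℚ. Then the operator on ℝ^{2N+1} given by the block-diagonal matrix diag(R_{θ₁},…,R_{θ_N}, 1) is (N+1)-supercyclic. -/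
/-!
The space `E` consists of the vectors whose second coordinate vanishes in each rotation plane. In
polar coordinates on each plane, `E` is parametrised by signed radii `r : Fin N → ℝ` and a last
coordinate `t`, with all angles zero; the operator adds the angle vector `α = θ / 2π` and leaves `r`
and `t` unchanged (`mulVec_polar`). Hence the orbit of `E` is the image of `{k • α} × (r, t)-space`
under the continuous surjection `polar`, and it is dense as soon as the multiples `k • α`, `k : ℕ`,
are dense in the torus.

The latter is Kronecker's theorem `denseRange_nsmul`, proved by Weyl's method. If `z = e_n(α) ≠ 1`
for every nontrivial character `e_n`, then the averages of `e_n` along the orbit are bounded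
geometric sums divided by their length, so they tend to `0 = ∫ e_n`, and therefore the averages of
a trigonometric polynomial tend to its integral. A nonnegative continuous function vanishing on the
orbit but not identically would have zero averages and positive integral, which is impossible since
trigonometric polynomials are uniformly dense. Independence of `π, θ₁, …, θ_N` over `ℚ` gives
`e_n(α) ≠ 1`.
-/

open Matrix

open MeasureTheory Filter Topology UnitAddTorus

/-! ### Kronecker's theorem -/

section Kronecker

variable {d : Type*} [Fintype d]

instance isProbabilityMeasure_volume_unitAddCircle :
    IsProbabilityMeasure (volume : Measure UnitAddCircle) :=
  ⟨by simp [AddCircle.measure_univ]⟩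

/-- Weyl equidistribution for trigonometric polynomials. -/
lemma tendsto_average_of_mem_span {α : UnitAddTorus d}
    (hα : ∀ n : d → ℤ, n ≠ 0 → mFourier n α ≠ 1) {p : C(UnitAddTorus d, ℂ)}
    (hp : p ∈ Submodule.span ℂ (Set.range (mFourier (d := d)))) :
    Tendsto (fun m : ℕ => (m : ℂ)⁻¹ * ∑ k ∈ Finset.range m, p (k • α)) atTop
      (𝓝 (∫ x, p x)) := by
  have hint (f : C(UnitAddTorus d, ℂ)) : Integrable f :=
    f.continuous.integrable_of_hasCompactSupport (HasCompactSupport.of_compactSpace _)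
  induction hp using Submodule.span_induction with
  | mem p h =>
    obtain ⟨n, rfl⟩ := h
    rcases eq_or_ne n 0 with rfl | hn
    · simp only [mFourier_zero, ContinuousMap.one_apply]
      refine tendsto_const_nhds.congr' ?_
      filter_upwards [eventually_ne_atTop 0] with m hm
      simp [hm]
    · -- Invariance under translation by `α` gives `∫ e_n = e_n(α) ∫ e_n`.
      have h0 : ∫ x, mFourier n x = 0 := by
        have h := integral_add_right_eq_self (μ := (volume : Measure (UnitAddTorus d)))
          (fun x => mFourier n x) α
        simp only [mFourier_apply_add] at h
        rw [integral_mul_const] at h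
        have : (∫ x, mFourier n x) * (mFourier n α - 1) = 0 := by
          rw [mul_sub, h]; ring
        exact (mul_eq_zero.1 this).resolve_right (sub_ne_zero.2 (hα n hn))
      rw [h0]
      simp only [mFourier_apply_nsmul]
      have hb : ∀ m : ℕ, ‖∑ k ∈ Finset.range m, mFourier n α ^ k‖ ≤
          2 / ‖mFourier n α - 1‖ := by
        intro m
        rw [geom_sum_eq (hα n hn), norm_div]
        gcongr
        refine (norm_sub_le _ _).trans ?_
        simp [norm_mFourier_apply]
        norm_num
      refine squeeze_zero_norm (a := fun m : ℕ => (m : ℝ)⁻¹ * (2 / ‖mFourier n α - 1‖))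
        (fun m => ?_) ?_
      · rw [norm_mul, norm_inv, Complex.norm_natCast]
        gcongr
        exact hb m
      · simpa using (tendsto_inv_atTop_nhds_zero_nat (𝕜 := ℝ)).mul_const (2 / ‖mFourier n α - 1‖)
  | zero => simp
  | add p q _ _ hp hq =>
    simp only [ContinuousMap.add_apply, Finset.sum_add_distrib, mul_add]
    rw [integral_add (hint p) (hint q)]
    exact hp.add hq
  | smul c p _ hp =>
    simp only [ContinuousMap.smul_apply, smul_eq_mul, ← Finset.mul_sum]
    rw [integral_const_mul]
    refine (hp.const_mul c).congr fun m => ?_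
    ring

/-- Kronecker's theorem: the multiples of `α` by natural numbers are dense in the torus if no
nontrivial character is trivial at `α`. -/
theorem denseRange_nsmul {α : UnitAddTorus d}
    (hα : ∀ n : d → ℤ, n ≠ 0 → mFourier n α ≠ 1) :
    DenseRange fun k : ℕ => k • α := by
  intro x
  by_contra hx
  set S : Set (UnitAddTorus d) := Set.range fun k : ℕ => k • α with hS
  have hSne : S.Nonempty := Set.range_nonempty _
  have hgc : Continuous fun y : UnitAddTorus d => Metric.infDist y S :=
    Metric.continuous_infDist_pt S
  have hpos : 0 < ∫ y : UnitAddTorus d, Metric.infDist y S :=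
    hgc.integral_pos_of_hasCompactSupport_nonneg_nonzero (HasCompactSupport.of_compactSpace _)
      (fun _ => Metric.infDist_nonneg)
      (((Metric.infDist_pos_iff_notMem_closure hSne).1 hx).ne' :)
  set c := ∫ y : UnitAddTorus d, Metric.infDist y S with hc
  let f : C(UnitAddTorus d, ℂ) := ⟨fun y => (Metric.infDist y S : ℂ), by fun_prop⟩
  have hfI : ∫ y, f y = (c : ℂ) := by
    rw [hc]; exact integral_ofReal
  have hf0 : ∀ k : ℕ, f (k • α) = 0 := fun k => by
    simp [f, Metric.infDist_zero_of_mem (show k • α ∈ S from ⟨k, rfl⟩)]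
  have hmem : f ∈ closure (Submodule.span ℂ (Set.range (mFourier (d := d))) :
      Set C(UnitAddTorus d, ℂ)) := by
    rw [← Submodule.topologicalClosure_coe, span_mFourier_closure_eq_top]
    trivial
  obtain ⟨p, hp, hfp⟩ := Metric.mem_closure_iff.1 hmem (c / 3) (by positivity)
  have hfp' : ∀ y, ‖f y - p y‖ ≤ c / 3 := fun y => by
    rw [← dist_eq_norm]
    exact (ContinuousMap.dist_apply_le_dist y).trans hfp.le
  have hint (f : C(UnitAddTorus d, ℂ)) : Integrable f :=
    f.continuous.integrable_of_hasCompactSupport (HasCompactSupport.of_compactSpace _)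
  -- On the orbit `f = 0`, so `p` is small there, and so is its integral.
  have h1 : ‖∫ y, p y‖ ≤ c / 3 := by
    refine le_of_tendsto (tendsto_average_of_mem_span hα hp).norm (Eventually.of_forall fun m => ?_)
    have hs : ‖∑ k ∈ Finset.range m, p (k • α)‖ ≤ m * (c / 3) := by
      refine (norm_sum_le_of_le _ (f := fun k : ℕ => p (k • α)) (n := fun _ => c / 3)
        fun k _ => ?_).trans (by simp)
      simpa [hf0] using hfp' (k • α)
    rw [norm_mul, norm_inv, Complex.norm_natCast]
    rcases Nat.eq_zero_or_pos m with rfl | hm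
    · simp; positivity
    · rw [inv_mul_le_iff₀ (by exact_mod_cast hm)]
      exact hs
  have h2 : ‖(∫ y, f y) - ∫ y, p y‖ ≤ c / 3 := by
    rw [← integral_sub (hint f) (hint p)]
    refine (norm_integral_le_of_norm_le_const (Eventually.of_forall hfp')).trans ?_
    simp
  have h3 : ‖∫ y, f y‖ = c := by
    rw [hfI, Complex.norm_real, Real.norm_of_nonneg hpos.le]
  have h4 := norm_sub_norm_le (∫ y, f y) (∫ y, p y)
  linarith

end Kronecker

/-! ### Polar coordinates on the rotation planes -/

section Polar

variable {N : ℕ}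

/-- The angle vector `θ`, measured in full turns. -/
noncomputable def turns (θ : Fin N → ℝ) : UnitAddTorus (Fin N) :=
  fun i => ((θ i / (2 * Real.pi) : ℝ) : UnitAddCircle)

/-- The vector with signed radius `r i` and angle `x i` (in full turns) in the `i`-th plane, and
last coordinate `t`. -/
noncomputable def polar (q : UnitAddTorus (Fin N) × (Fin N → ℝ) × ℝ) : (Fin 2 × Fin N) ⊕ Unit → ℝ :=
  Sum.elim
    (fun j => q.2.1 j.2 * ![(AddCircle.toCircle (q.1 j.2) : ℂ).re,
      (AddCircle.toCircle (q.1 j.2) : ℂ).im] j.1)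
    (fun _ => q.2.2)

lemma continuous_polar : Continuous (polar (N := N)) := by
  have hc (i : Fin N) : Continuous fun q : UnitAddTorus (Fin N) × (Fin N → ℝ) × ℝ =>
      (AddCircle.toCircle (q.1 i) : ℂ) :=
    continuous_subtype_val.comp (AddCircle.continuous_toCircle.comp (by fun_prop))
  refine continuous_pi ?_
  rintro (⟨a, i⟩ | u)
  · have h1 : Continuous fun q : UnitAddTorus (Fin N) × (Fin N → ℝ) × ℝ => q.2.1 i := by fun_prop
    fin_cases a
    · exact h1.mul (Complex.continuous_re.comp (hc i))
    · exact h1.mul (Complex.continuous_im.comp (hc i))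
  · exact (by fun_prop : Continuous fun q : UnitAddTorus (Fin N) × (Fin N → ℝ) × ℝ => q.2.2)

lemma toCircle_turns (θ : Fin N → ℝ) (i : Fin N) :
    AddCircle.toCircle (turns θ i) = Circle.exp (θ i) := by
  rw [turns, AddCircle.toCircle_apply_mk]
  congr 1
  field_simp

lemma surjective_polar : Function.Surjective (polar (N := N)) := by
  intro v
  let z : Fin N → ℂ := fun i => ⟨v (Sum.inl (0, i)), v (Sum.inl (1, i))⟩
  refine ⟨(turns fun i => (z i).arg, fun i => ‖z i‖, v (Sum.inr ())), ?_⟩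
  ext (⟨a, i⟩ | u)
  · have h := Complex.norm_mul_exp_arg_mul_I (z i)
    fin_cases a
    · have := congrArg Complex.re h
      rw [Complex.re_ofReal_mul] at this
      simp [polar, toCircle_turns, Circle.coe_exp, z]
    · have := congrArg Complex.im h
      rw [Complex.im_ofReal_mul] at this
      simp [polar, toCircle_turns, Circle.coe_exp, z]
  · rfl

lemma mulVec_polar (θ : Fin N → ℝ) (x : UnitAddTorus (Fin N)) (w : (Fin N → ℝ) × ℝ) :
    (Matrix.fromBlocks (Matrix.blockDiagonal fun i : Fin N => rotM (θ i)) 0 0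
        (1 : Matrix Unit Unit ℝ)).mulVecLin (polar (x, w)) = polar (x + turns θ, w) := by
  ext (⟨a, i⟩ | u)
  · have hs : ∀ g : Fin 2 × Fin N → ℝ,
        ∑ j : Fin 2 × Fin N, Matrix.blockDiagonal (fun i : Fin N => rotM (θ i)) (a, i) j * g j =
          ∑ b : Fin 2, rotM (θ i) a b * g (b, i) := by
      intro g
      rw [Fintype.sum_prod_type]
      refine Finset.sum_congr rfl fun b _ => ?_
      simp [Matrix.blockDiagonal_apply]
    simp only [Matrix.mulVecLin_apply, Matrix.mulVec, dotProduct, Fintype.sum_sum_type,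
      Matrix.fromBlocks_apply₁₁, Matrix.fromBlocks_apply₁₂, hs]
    fin_cases a <;>
    · simp [polar, rotM, AddCircle.toCircle_add, toCircle_turns, Circle.coe_exp,
        Complex.exp_ofReal_mul_I_re, Complex.exp_ofReal_mul_I_im]
      ring
  · simp [polar, Matrix.mulVec, dotProduct, Fintype.sum_sum_type]

/-- The vectors with all angles zero, parametrised linearly by the signed radii and the last
coordinate. -/
noncomputable def polarZero (N : ℕ) : ((Fin N → ℝ) × ℝ) →ₗ[ℝ] ((Fin 2 × Fin N) ⊕ Unit → ℝ) where
  toFun w := polar (0, w)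
  map_add' w w' := by
    ext (⟨a, i⟩ | u)
    · simp [polar, add_mul]
    · simp [polar]
  map_smul' c w := by
    ext (⟨a, i⟩ | u)
    · simp [polar, mul_assoc]
    · simp [polar]

lemma injective_polarZero : Function.Injective (polarZero N) := by
  rintro ⟨r, t⟩ ⟨r', t'⟩ h
  have h1 : ∀ i, r i = r' i := fun i => by
    simpa [polarZero, polar] using congrFun h (Sum.inl (0, i))
  have h2 : t = t' := by simpa [polarZero, polar] using congrFun h (Sum.inr ())
  exact Prod.ext (funext h1) h2

/-- `e_n(θ / 2π) = 1` would mean `∑ n i * θ i ∈ 2π ℤ`, a rational relation. -/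
lemma mFourier_turns_ne_one {θ : Fin N → ℝ}
    (hθ : LinearIndependent ℚ (Fin.cons Real.pi θ : Fin (N + 1) → ℝ))
    (n : Fin N → ℤ) (hn : n ≠ 0) : mFourier n (turns θ) ≠ 1 := by
  intro h
  have h1 : mFourier n (turns θ) = Complex.exp ((∑ i, n i * θ i : ℝ) * Complex.I) := by
    simp only [mFourier, ContinuousMap.coe_mk, fourier_apply, AddCircle.toCircle_zsmul,
      toCircle_turns, Circle.coe_zpow, Circle.coe_exp, ← Complex.exp_int_mul]
    rw [← Complex.exp_sum]
    push_cast
    rw [Finset.sum_mul]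
    simp only [mul_assoc]
  rw [h1, Complex.exp_eq_one_iff] at h
  obtain ⟨m, hm⟩ := h
  have hm' : ∑ i, n i * θ i = m * (2 * Real.pi) := by
    have := congrArg Complex.im hm
    simpa using this
  have hz := Fintype.linearIndependent_iff.1 hθ
    (Fin.cons (-2 * m : ℚ) fun i => (n i : ℚ)) (by
      rw [Fin.sum_univ_succ]
      simp only [Fin.cons_zero, Fin.cons_succ, Rat.smul_def]
      push_cast
      rw [hm']
      ring)
  refine hn (funext fun i => ?_)
  simpa using hz i.succ

end Polar

theorem stmt4 (N : ℕ) (hN : 1 ≤ N) (θ : Fin N → ℝ)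
    (hθ : LinearIndependent ℚ (Fin.cons Real.pi θ : Fin (N + 1) → ℝ)) :
    NSupercyclic (N + 1)
      (Matrix.fromBlocks (Matrix.blockDiagonal fun i : Fin N => rotM (θ i)) 0 0
        (1 : Matrix Unit Unit ℝ)).mulVecLin := by
  refine ⟨LinearMap.range (polarZero N), ?_, ?_⟩
  · rw [LinearMap.finrank_range_of_inj injective_polarZero]
    simp
  · have hpow : ∀ (k : ℕ) (w : (Fin N → ℝ) × ℝ),
        ((Matrix.fromBlocks (Matrix.blockDiagonal fun i : Fin N => rotM (θ i)) 0 0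
          (1 : Matrix Unit Unit ℝ)).mulVecLin ^ k) (polarZero N w) = polar (k • turns θ, w) := by
      intro k w
      induction k with
      | zero => simp [polarZero]
      | succ k ih => rw [pow_succ', Module.End.mul_apply, ih, mulVec_polar, succ_nsmul]
    have hd : Dense ((Set.range fun k : ℕ => k • turns θ) ×ˢ
        (Set.univ : Set ((Fin N → ℝ) × ℝ))) :=
      Dense.prod (denseRange_nsmul (mFourier_turns_ne_one hθ)) dense_univ
    refine (surjective_polar.denseRange.dense_image continuous_polar hd).mono ?_
    rintro _ ⟨⟨_, w⟩, ⟨⟨k, rfl⟩, -⟩, rfl⟩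
    exact Set.mem_iUnion.2 ⟨k, polarZero N w, ⟨w, rfl⟩, hpow k w⟩
end

section
/- Let N > 1, θ ∈ ℝ, and let J_N be the operator on ℝ^{2N} given in 2×2 block form by the N×N block matrix with R_θ on the main diagonal, R_θ on the first superdiagonal, and zero blocks elsewhere. Then J_N is not N-supercyclic. -/
/-!
Identify `ℝ^{2N}` with `ℂ^N`: the operator is `T = (cos θ + sin θ I)(1 + S)`, where `I` is
multiplication by `i` and `S` is the nilpotent shift, which commutes with `I`. In fact no subspace
`E` of codimension at least two has a dense orbit under such an operator.

Choose linearly independent real functionals `f`, `g` vanishing on `E`, and let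
`q y = f y * g (I y) - f (I y) * g y`. If `z = T^k e` with `e ∈ E`, then
`y = (1 + S)^{-k} z = (α + β I) e` for some real `α`, `β`, and the vectors `(f y, f (I y))` and
`(g y, g (I y))` are both multiples of `(β, α)`; hence `q ((1 + S)^{-k} z) = 0` (`pencil_eq_zero`).
Independence of `f` and `g` forces `q ≠ 0` (`exists_pencil_ne_zero`).

Since `(1 + S)^{-1}` is unipotent, `q ((1 + S)^{-k} z)` is a polynomial in `k` whose coefficients
are continuous functions of `z` (`exists_poly_eval`). It is not the zero polynomial, so near a point
where its leading coefficient does not vanish it is nonzero for all large `k`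
(`exists_open_eval_ne_zero`). That neighbourhood meets only finitely many `T^k(E)`, which are
proper closed subspaces and so cannot be dense in it.
-/

open Matrix

/-! ### Polynomial dependence on the exponent -/

/-- A nonzero polynomial in `k` with continuous coefficients is nonvanishing, for all large `k`, on
a common nonempty open set. -/
lemma exists_open_eval_ne_zero {X : Type*} [TopologicalSpace X] (P : Polynomial C(X, ℝ))
    (hP : P ≠ 0) : ∃ V : Set X, IsOpen V ∧ V.Nonempty ∧ ∃ K : ℕ, ∀ k ≥ K, ∀ z ∈ V,
      (P.eval (k : C(X, ℝ))) z ≠ 0 := by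
  have hl : P.leadingCoeff ≠ 0 := Polynomial.leadingCoeff_ne_zero.mpr hP
  obtain ⟨z₀, hz₀⟩ : ∃ z, P.leadingCoeff z ≠ 0 := by
    by_contra! h
    exact hl (ContinuousMap.ext h)
  set d := P.natDegree with hd
  -- the reversed polynomial, `k^{-d} P(k)` as a function of `t = 1 / k`
  let G : ℝ × X → ℝ := fun p => ∑ i ∈ Finset.range (d + 1), P.coeff i p.2 * p.1 ^ (d - i)
  have hG : Continuous G := by
    refine continuous_finsetSum _ fun i _ => ?_
    exact ((P.coeff i).continuous.comp continuous_snd).mul (continuous_fst.pow _)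
  have hG0 : G (0, z₀) ≠ 0 := by
    have : G (0, z₀) = P.leadingCoeff z₀ := by
      simp only [G]
      rw [Finset.sum_eq_single d]
      · rw [Nat.sub_self, pow_zero, mul_one]
        rfl
      · intro i hi hne
        have : d - i ≠ 0 := by
          have := Finset.mem_range.mp hi
          omega
        simp [this]
      · simp
    rwa [this]
  have hev : ∀ᶠ p in nhds ((0 : ℝ), z₀), G p ≠ 0 := hG.continuousAt.eventually_ne hG0
  rw [nhds_prod_eq] at hev
  obtain ⟨pa, ha, pb, hb, hab⟩ := Filter.eventually_prod_iff.mp hev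
  obtain ⟨V, hVb, hVo, hzV⟩ := eventually_nhds_iff.mp hb
  have ht : ∀ᶠ k : ℕ in Filter.atTop, pa ((k : ℝ)⁻¹) :=
    (tendsto_inv_atTop_zero.comp tendsto_natCast_atTop_atTop).eventually ha
  obtain ⟨K, hK⟩ := Filter.eventually_atTop.mp ht
  refine ⟨V, hVo, ⟨z₀, hzV⟩, K + 1, fun k hk z hz => ?_⟩
  have h1 := hab (hK k (by omega)) (hVb z hz)
  have hk0 : (k : ℝ) ≠ 0 := by
    have : k ≠ 0 := by omega
    exact_mod_cast this
  have h2 : (P.eval (k : C(X, ℝ))) z = (k : ℝ) ^ d * G ((k : ℝ)⁻¹, z) := by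
    rw [Polynomial.eval_eq_sum_range, ContinuousMap.sum_apply, Finset.mul_sum]
    refine Finset.sum_congr rfl fun i hi => ?_
    have hi' : i ≤ d := by
      have := Finset.mem_range.mp hi
      omega
    obtain ⟨r, hr⟩ := Nat.exists_eq_add_of_le hi'
    have : d - i = r := by omega
    rw [this, hr]
    simp only [ContinuousMap.mul_apply, ContinuousMap.pow_apply, ContinuousMap.natCast_apply]
    rw [inv_pow, pow_add]
    field_simp
  rw [h2]
  exact mul_ne_zero (pow_ne_zero _ hk0) h1

/-- Along powers of a unipotent operator, a linear functional is polynomial in the exponent: this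
is the binomial formula `(1 + A)^k = ∑ m, C(k, m) A^m`, a finite sum with range independent
of `k`. -/
lemma exists_poly_eval {ι : Type*} [Fintype ι] (A : Module.End ℝ (ι → ℝ)) (hA : IsNilpotent A)
    (f : (ι → ℝ) →ₗ[ℝ] ℝ) : ∃ P : Polynomial C(ι → ℝ, ℝ), ∀ (k : ℕ) (z : ι → ℝ),
      (P.eval (k : C(ι → ℝ, ℝ))) z = f (((1 + A) ^ k) z) := by
  obtain ⟨M, hM⟩ := hA
  let φ : ℕ → C(ι → ℝ, ℝ) := fun m =>
    ⟨fun z => (m.factorial : ℝ)⁻¹ * f ((A ^ m) z),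
      continuous_const.mul (f ∘ₗ (A ^ m)).continuous_of_finiteDimensional⟩
  refine ⟨∑ m ∈ Finset.range M, Polynomial.C (φ m) * descPochhammer C(ι → ℝ, ℝ) m,
    fun k z => ?_⟩
  have hpow : (1 + A) ^ k = ∑ m ∈ Finset.range M, (k.choose m : ℝ) • A ^ m := by
    have h1 : (1 + A) ^ k = ∑ m ∈ Finset.range (k + 1), (k.choose m : ℝ) • A ^ m := by
      rw [add_comm, (Commute.one_right A).add_pow]
      refine Finset.sum_congr rfl fun m _ => ?_
      rw [one_pow, mul_one, Nat.cast_smul_eq_nsmul, nsmul_eq_mul, Nat.cast_comm]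
    have h2 : ∀ L, k + 1 ≤ L → ∑ m ∈ Finset.range (k + 1), (k.choose m : ℝ) • A ^ m
        = ∑ m ∈ Finset.range L, (k.choose m : ℝ) • A ^ m := fun L hL => by
      refine Finset.sum_subset (Finset.range_mono hL) fun m _ hm => ?_
      rw [Nat.choose_eq_zero_of_lt (by simpa using hm)]
      simp
    have h3 : ∀ L, M ≤ L → ∑ m ∈ Finset.range M, (k.choose m : ℝ) • A ^ m
        = ∑ m ∈ Finset.range L, (k.choose m : ℝ) • A ^ m := fun L hL => by
      refine Finset.sum_subset (Finset.range_mono hL) fun m _ hm => ?_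
      rw [pow_eq_zero_of_le (by simpa using hm) hM, smul_zero]
    rw [h1, h2 _ (le_max_left (k + 1) M), h3 _ (le_max_right (k + 1) M)]
  rw [hpow, Polynomial.eval_finsetSum, ContinuousMap.sum_apply, LinearMap.sum_apply, map_sum]
  refine Finset.sum_congr rfl fun m _ => ?_
  rw [Polynomial.eval_mul, Polynomial.eval_C, descPochhammer_eval_eq_descFactorial,
    Nat.descFactorial_eq_factorial_mul_choose]
  have : (m.factorial : ℝ) ≠ 0 := by exact_mod_cast m.factorial_ne_zero
  simp only [φ, ContinuousMap.mul_apply, ContinuousMap.natCast_apply, ContinuousMap.coe_mk,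
    LinearMap.smul_apply, map_smul, smul_eq_mul]
  push_cast
  field_simp

/-! ### The quadratic form of a pair of functionals -/

section Pencil

variable {X : Type*} [AddCommGroup X] [Module ℝ X] {I : Module.End ℝ X}

/-- If `f` and `g` vanish at `e`, then `q` vanishes on every vector of the
complex line through `e`. -/
lemma pencil_eq_zero (hI : ∀ x, I (I x) = -x) (f g : X →ₗ[ℝ] ℝ) (e : X) (hf : f e = 0)
    (hg : g e = 0) (α β : ℝ) (y : X) (hy : y = α • e + β • I e) :
    f y * g (I y) - f (I y) * g y = 0 := by
  subst hy
  simp only [map_add, map_smul, hI, map_neg, hf, hg, smul_eq_mul]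
  ring

/-- If the form `q` vanished identically, `ker f` would be stable under `I`; but it has real
codimension one, which is odd. -/
lemma exists_pencil_ne_zero (hI : ∀ x, I (I x) = -x) (f g : X →ₗ[ℝ] ℝ) (hf : f ≠ 0) (y₀ : X)
    (hf₀ : f y₀ = 0) (hg₀ : g y₀ ≠ 0) : ∃ y, f y * g (I y) - f (I y) * g y ≠ 0 := by
  by_contra! h
  have key : ∀ y, f y = 0 → g y ≠ 0 → f (I y) = 0 := fun y hy hgy => by
    have := h y
    rw [hy] at this
    simpa [hgy] using this
  have hker : ∀ y, f y = 0 → f (I y) = 0 := fun y hy => by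
    by_cases hgy : g y = 0
    · have h1 := key (y + y₀) (by simp [hy, hf₀]) (by simpa [hgy] using hg₀)
      simpa [key y₀ hf₀ hg₀] using h1
    · exact key y hy hgy
  obtain ⟨w, hw⟩ : ∃ w, f w ≠ 0 := by
    by_contra! h'
    exact hf (LinearMap.ext h')
  have h1 := hker (f w • I w - f (I w) • w) (by simp; ring)
  simp only [map_sub, map_smul, hI, map_neg, smul_eq_mul] at h1
  have : 0 < f w ^ 2 := by positivity
  nlinarith [sq_nonneg (f (I w))]

end Pencil

/-! ### Orbits of subspaces of codimension at least two -/

/-- The powers of a complex scalar are complex scalars. -/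
lemma exists_scalar_pow {X : Type*} [AddCommGroup X] [Module ℝ X] {I : Module.End ℝ X}
    (hI : ∀ x, I (I x) = -x) (c s : ℝ) (k : ℕ) :
    ∃ α β : ℝ, (c • 1 + s • I) ^ k = α • (1 : Module.End ℝ X) + β • I := by
  induction k with
  | zero => exact ⟨1, 0, by simp⟩
  | succ k ih =>
    obtain ⟨α, β, h⟩ := ih
    refine ⟨c * α - s * β, c * β + s * α, ?_⟩
    rw [pow_succ, h]
    ext x
    simp only [Module.End.mul_apply, LinearMap.add_apply, LinearMap.smul_apply,
      Module.End.one_apply, map_add, map_smul, hI]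
    module

/-- The orbit of a subspace of codimension at least two under a complex scalar times a
complex-linear unipotent operator is not dense. -/
lemma not_dense_orbit {ι : Type*} [Fintype ι] (I S : Module.End ℝ (ι → ℝ))
    (hI : ∀ x, I (I x) = -x) (hS : IsNilpotent S) (hIS : Commute I S) (c s : ℝ)
    (E : Submodule ℝ (ι → ℝ)) (hE : Module.finrank ℝ E + 1 < Module.finrank ℝ (ι → ℝ)) :
    ¬ Dense (⋃ k : ℕ, ⇑(((c • 1 + s • I) * (1 + S)) ^ k) '' (E : Set (ι → ℝ))) := by
  intro hD
  set R : Module.End ℝ (ι → ℝ) := c • 1 + s • I with hR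
  obtain ⟨u, hu⟩ := hS.isUnit_one_add
  have hRU : Commute R (1 + S) := by
    have h1 : Commute I (1 + S) := (Commute.one_right I).add_right hIS
    exact ((Commute.one_left _).smul_left c).add_left (h1.smul_left s)
  -- `(1 + S)⁻¹ = 1 - (1 + S)⁻¹ S` is again unipotent
  let A : Module.End ℝ (ι → ℝ) := -((↑u⁻¹ : Module.End ℝ (ι → ℝ)) * S)
  have hA1 : 1 + A = ↑u⁻¹ := by
    have h1 : (↑u⁻¹ : Module.End ℝ (ι → ℝ)) * (1 + S) = 1 := by rw [← hu]; simp
    rw [mul_add, mul_one] at h1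
    simp only [A]
    rw [← h1]
    abel
  have hA : IsNilpotent A := by
    refine IsNilpotent.neg ?_
    refine Commute.isNilpotent_mul_left (y := S) ?_ hS
    have h1 : Commute (↑u : Module.End ℝ (ι → ℝ)) S := by
      rw [hu]
      exact (Commute.one_left S).add_left (Commute.refl S)
    exact h1.units_inv_left
  -- two independent functionals vanishing on `E`
  obtain ⟨f, hf0, hfE⟩ := Submodule.exists_le_ker_of_lt_top E (by
    rw [lt_top_iff_ne_top]
    rintro rfl
    rw [finrank_top] at hE
    omega)
  obtain ⟨y₀, hy₀, hyE⟩ : ∃ y ∈ LinearMap.ker f, y ∉ E := by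
    by_contra! h
    have h1 : Module.finrank ℝ (LinearMap.ker f) ≤ Module.finrank ℝ E :=
      Submodule.finrank_mono h
    have h2 := LinearMap.finrank_range_add_finrank_ker f
    have h3 : Module.finrank ℝ (LinearMap.range f) ≤ 1 :=
      (Submodule.finrank_le _).trans (by simp)
    omega
  obtain ⟨g, hg0, hgE⟩ := Submodule.exists_le_ker_of_notMem hyE
  obtain ⟨y₁, hy₁⟩ := exists_pencil_ne_zero hI f g hf0 y₀ hy₀ hg0
  obtain ⟨Pf, hPf⟩ := exists_poly_eval A hA f
  obtain ⟨Pg, hPg⟩ := exists_poly_eval A hA g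
  obtain ⟨Pf', hPf'⟩ := exists_poly_eval A hA (f ∘ₗ I)
  obtain ⟨Pg', hPg'⟩ := exists_poly_eval A hA (g ∘ₗ I)
  set P := Pf * Pg' - Pf' * Pg with hPdef
  have hPe : ∀ (k : ℕ) (z : ι → ℝ), (P.eval (k : C(ι → ℝ, ℝ))) z =
      f (((1 + A) ^ k) z) * g (I (((1 + A) ^ k) z))
        - f (I (((1 + A) ^ k) z)) * g (((1 + A) ^ k) z) := fun k z => by
    simp [hPdef, Polynomial.eval_sub, Polynomial.eval_mul, hPf, hPg, hPf', hPg']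
  have hP : P ≠ 0 := by
    intro h0
    have h1 := hPe 0 y₁
    rw [h0] at h1
    simp only [Polynomial.eval_zero, ContinuousMap.zero_apply, pow_zero,
      Module.End.one_apply] at h1
    exact hy₁ h1.symm
  obtain ⟨V, hVo, hVne, K, hK⟩ := exists_open_eval_ne_zero P hP
  set T : Module.End ℝ (ι → ℝ) := R * (1 + S) with hT
  have hfar : ∀ k ≥ K, ∀ e ∈ E, (T ^ k) e ∉ V := by
    intro k hk e he hV
    refine hK k hk _ hV ?_
    obtain ⟨α, β, hαβ⟩ := exists_scalar_pow hI c s k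
    rw [hPe]
    refine pencil_eq_zero hI f g e (hfE he) (hgE he) α β _ ?_
    have h1 : (1 + A) ^ k * T ^ k = α • 1 + β • I := by
      rw [hT, hRU.eq, hRU.symm.mul_pow, ← mul_assoc, hA1, ← hu, ← Units.val_pow_eq_pow_val,
        ← Units.val_pow_eq_pow_val, inv_pow, Units.inv_mul, one_mul, hαβ]
    rw [← Module.End.mul_apply, h1]
    simp
  -- for `k < K` the sets `T^k(E)` are closed with dense complement
  let F : Fin K → Submodule ℝ (ι → ℝ) := fun k => E.map (T ^ (k : ℕ))
  have hFo : ∀ k, IsOpen ((F k : Set (ι → ℝ))ᶜ) := fun k =>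
    (F k).closed_of_finiteDimensional.isOpen_compl
  have hFd : ∀ k, Dense ((F k : Set (ι → ℝ))ᶜ) := fun k => by
    rw [← interior_eq_empty_iff_dense_compl]
    by_contra hne
    have htop := (F k).eq_top_of_nonempty_interior' (Set.nonempty_iff_ne_empty.mpr hne)
    have h1 : Module.finrank ℝ (F k) ≤ Module.finrank ℝ E := Submodule.finrank_map_le _ _
    rw [htop, finrank_top] at h1
    omega
  have hdense := dense_iInter_of_isOpen hFo hFd
  have hopen : IsOpen (V ∩ ⋂ k, (F k : Set (ι → ℝ))ᶜ) := hVo.inter (isOpen_iInter_of_finite hFo)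
  obtain ⟨z, ⟨hzV, hzF⟩, hz⟩ := hD.inter_open_nonempty _ hopen
    (hdense.inter_open_nonempty V hVo hVne)
  obtain ⟨k, e, he, rfl⟩ := Set.mem_iUnion.mp hz
  by_cases hk : K ≤ k
  · exact hfar k hk e he hzV
  · exact Set.mem_iInter.mp hzF ⟨k, not_le.mp hk⟩ ⟨e, he, rfl⟩

/-! ### The Jordan block as a complex operator -/

/-- Multiplication by `i` on `ℂ^N`, with `(0, j)` and `(1, j)` indexing the real and imaginary
parts of the `j`-th coordinate. -/
def mulI (N : ℕ) : Module.End ℝ (Fin 2 × Fin N → ℝ) where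
  toFun z p := if p.1 = 0 then -z (1, p.2) else z (0, p.2)
  map_add' x y := by
    ext p
    simp only [Pi.add_apply]
    split_ifs <;> ring
  map_smul' c x := by
    ext p
    simp only [Pi.smul_apply, smul_eq_mul, RingHom.id_apply]
    split_ifs <;> ring

/-- The backward shift `(z_j) ↦ (z_{j+1})` on `ℂ^N`, with zero as last coordinate. -/
def shiftS (N : ℕ) : Module.End ℝ (Fin 2 × Fin N → ℝ) where
  toFun z p := if h : (p.2 : ℕ) + 1 < N then z (p.1, ⟨p.2 + 1, h⟩) else 0
  map_add' x y := by
    ext p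
    simp only [Pi.add_apply]
    split_ifs <;> ring
  map_smul' c x := by
    ext p
    simp only [Pi.smul_apply, smul_eq_mul, RingHom.id_apply]
    split_ifs <;> ring

lemma mulI_mulI (N : ℕ) (x : Fin 2 × Fin N → ℝ) : mulI N (mulI N x) = -x := by
  ext ⟨a, j⟩
  fin_cases a <;> simp [mulI]

lemma shiftS_nilpotent (N : ℕ) : IsNilpotent (shiftS N) := by
  have h : ∀ m (z : Fin 2 × Fin N → ℝ) (p : Fin 2 × Fin N), N ≤ p.2 + m →
      ((shiftS N) ^ m) z p = 0 := by
    intro m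
    induction m with
    | zero => intro z p hp; have := p.2.isLt; omega
    | succ m ih =>
      intro z p hp
      rw [pow_succ', Module.End.mul_apply]
      simp only [shiftS, LinearMap.coe_mk, AddHom.coe_mk]
      split_ifs with h
      · exact ih z _ (by simp only; omega)
      · rfl
  refine ⟨N, ?_⟩
  ext1 z
  ext p
  simpa using h N _ p (by omega)

lemma mulI_comm_shiftS (N : ℕ) : Commute (mulI N) (shiftS N) := by
  refine LinearMap.ext fun z => ?_
  ext ⟨a, j⟩
  simp only [Module.End.mul_apply, mulI, shiftS, LinearMap.coe_mk, AddHom.coe_mk]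
  split_ifs <;> simp

lemma jordan_eq (N : ℕ) (θ : ℝ) :
    (Matrix.of fun p q : Fin 2 × Fin N =>
        if (q.2 : ℕ) = (p.2 : ℕ) ∨ (q.2 : ℕ) = (p.2 : ℕ) + 1 then rotM θ p.1 q.1
        else 0).mulVecLin
      = (Real.cos θ • 1 + Real.sin θ • mulI N) * (1 + shiftS N) := by
  refine LinearMap.ext fun z => ?_
  have hsum : ∀ (j : Fin N) (r : ℝ) (x : Fin N → ℝ),
      ∑ l : Fin N, (if (l : ℕ) = (j : ℕ) ∨ (l : ℕ) = (j : ℕ) + 1 then r else 0) * x l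
        = r * (x j + if h : (j : ℕ) + 1 < N then x ⟨j + 1, h⟩ else 0) := by
    intro j r x
    have h1 : ∀ l : Fin N, (if (l : ℕ) = (j : ℕ) ∨ (l : ℕ) = (j : ℕ) + 1 then r else 0) * x l
        = (if l = j then r * x l else 0) + (if (l : ℕ) = (j : ℕ) + 1 then r * x l else 0) := by
      intro l
      by_cases ha : l = j
      · subst ha; simp
      · have : (l : ℕ) ≠ j := fun h => ha (Fin.ext h)
        simp [ha, this]
    rw [Finset.sum_congr rfl fun l _ => h1 l, Finset.sum_add_distrib, mul_add]
    congr 1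
    · simp
    · split_ifs with h
      · rw [Finset.sum_eq_single ⟨j + 1, h⟩]
        · simp
        · intro b _ hb
          rw [if_neg fun h' => hb (Fin.ext h')]
        · simp
      · rw [mul_zero]
        refine Finset.sum_eq_zero fun l _ => if_neg ?_
        have := l.isLt
        omega
  ext ⟨a, j⟩
  simp only [Matrix.mulVecLin_apply, Matrix.mulVec, dotProduct, Matrix.of_apply,
    Fintype.sum_prod_type, Fin.sum_univ_two, Module.End.mul_apply, LinearMap.add_apply,
    LinearMap.smul_apply, Module.End.one_apply, Pi.add_apply, Pi.smul_apply, smul_eq_mul]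
  rw [hsum j _ (fun l => z (0, l)), hsum j _ (fun l => z (1, l))]
  fin_cases a <;> simp [rotM, mulI, shiftS] <;> ring

theorem stmt8 (N : ℕ) (hN : 1 < N) (θ : ℝ) :
    ¬ NSupercyclic N
      (Matrix.of fun p q : Fin 2 × Fin N =>
        if (q.2 : ℕ) = (p.2 : ℕ) ∨ (q.2 : ℕ) = (p.2 : ℕ) + 1 then rotM θ p.1 q.1
        else 0).mulVecLin := by
  rintro ⟨E, hE, hD⟩
  rw [jordan_eq] at hD
  refine not_dense_orbit (mulI N) (shiftS N) (mulI_mulI N) (shiftS_nilpotent N)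
    (mulI_comm_shiftS N) _ _ E ?_ hD
  rw [hE]
  simp
  omega
end

section
/- Let T be an operator on ℝ^N (N ≥ 2) whose real Jordan decomposition consists of Jordan blocks (classical blocks for real eigenvalues and real blocks for conjugate pairs of complex eigenvalues), all with nonzero moduli. Define the relative size ρ of T as the sum over all Jordan blocks of their relative sizes, where a classical Jordan block of size k has relative size k and a real Jordan block of size 2k has relative size k. Then T is not (ρ−1)-supercyclic. -/
/-!
Write `ρ = ∑ k i`. Each of the `ρ` slots `(i, s)`, `s < k i`, carries a complex coordinate
`z i s` on `ℝ^N` (a real one for a classical block), and for the eigenvalue `λ i` one has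
`z (T x) i s = λ i * (z x i s + z x i (s + 1))`. Hence
`z (T^n x) i s = λ i ^ n * ∑ j, n.choose j * z x i (s + j)` (`jordan_pow`).
The map `sqMod` recording the squared moduli of the `ρ` coordinates forgets all rotations and
signs, so it takes the same value at `T^n x` and at `A n (Z x)`, where `Z x` is the vector of real
and imaginary parts of the coordinates of `x` and `A n` is the operator with `λ i` replaced by
`|λ i| > 0`.

The matrix entries of `A n` are combinations of the functions `n ↦ r ^ n * n ^ m` with `r > 0`.
Finitely many such functions have a common leading term (`exists_leading`). Applied to the
maximal minors of `A n` on a subspace `G`, this shows that the subspaces `A n G` converge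
to a subspace `F` with `dim F ≤ dim G` (`exists_limit`), so that `F ∪ ⋃ n, A n G` is closed
(`exists_closed`). Take `G = Z E`.

The map `sqMod` into `ℝ^ρ` is proper, so the image of `F ∪ ⋃ n, A n G` is closed; if the orbit of
`E` were dense it would contain the squared moduli of all points, that is, the positive orthant.
But `sqMod` is smooth and the image is that of countably many subspaces of dimension at most
`dim E < ρ`, so its Hausdorff dimension is less than `ρ` and its complement is dense
(`not_dense`).
-/

open Matrix

/-- A real Jordan block, encoded by its modulus `μ`, an optional angle
(`none` for a classical Jordan block with real eigenvalue `μ`, `some θ` for a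
real Jordan block with 2×2 blocks `μ R_θ`) and its relative size `k`.
A classical block has size `k` (entries `μ` on the diagonal and first superdiagonal),
a real block has size `2k` (blocks `μ R_θ` on the diagonal and first superdiagonal). -/
noncomputable def jB : ℝ → Option ℝ → ℕ → Σ n : ℕ, Matrix (Fin n) (Fin n) ℝ
  | μ, none, k =>
      ⟨k, Matrix.of fun i j => if (j : ℕ) = (i : ℕ) ∨ (j : ℕ) = (i : ℕ) + 1 then μ else 0⟩
  | μ, some θ, k =>
      ⟨2 * k, Matrix.of fun p q =>
        if (q : ℕ) / 2 = (p : ℕ) / 2 ∨ (q : ℕ) / 2 = (p : ℕ) / 2 + 1 then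
          μ * rotM θ ⟨(p : ℕ) % 2, Nat.mod_lt _ (by norm_num)⟩
            ⟨(q : ℕ) % 2, Nat.mod_lt _ (by norm_num)⟩
        else 0⟩

open Filter Topology

/-! ### Exponential polynomials and their leading terms -/

/-- The exponential monomial `k ↦ r ^ k * k ^ m` with `r > 0`. The index set is ordered
lexicographically, which is the order of growth at infinity (`expMono_tendsto`). -/
noncomputable def expMono (p : {r : ℝ // 0 < r} ×ₗ ℕ) : ℕ → ℝ :=
  fun k => (ofLex p).1.1 ^ k * (k : ℝ) ^ (ofLex p).2

/-- The multiplicative monoid of all exponential monomials. -/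
def expMonoid : Submonoid (ℕ → ℝ) where
  carrier := Set.range expMono
  one_mem' := ⟨toLex (⟨1, one_pos⟩, 0), by funext k; simp [expMono]⟩
  mul_mem' := by
    rintro _ _ ⟨p, rfl⟩ ⟨q, rfl⟩
    refine ⟨toLex (⟨(ofLex p).1.1 * (ofLex q).1.1, mul_pos (ofLex p).1.2 (ofLex q).1.2⟩,
      (ofLex p).2 + (ofLex q).2), ?_⟩
    funext k
    simp only [expMono, ofLex_toLex, Pi.mul_apply]
    ring

/-- The algebra of exponential polynomials: linear combinations of exponential monomials with
positive bases. -/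
noncomputable def expPoly : Subalgebra ℝ (ℕ → ℝ) :=
  Algebra.adjoin ℝ (expMonoid : Set (ℕ → ℝ))

lemma mem_expPoly_iff {f : ℕ → ℝ} :
    f ∈ expPoly ↔ f ∈ Submodule.span ℝ (Set.range expMono) := by
  rw [expPoly, ← Subalgebra.mem_toSubmodule, Algebra.adjoin_eq_span, Submonoid.closure_eq]
  rfl

lemma expMono_mem (r : ℝ) (hr : 0 < r) (m : ℕ) :
    (fun k : ℕ => r ^ k * (k : ℝ) ^ m) ∈ expPoly :=
  Algebra.subset_adjoin ⟨toLex (⟨r, hr⟩, m), rfl⟩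

lemma expMono_pos (p : {r : ℝ // 0 < r} ×ₗ ℕ) {k : ℕ} (hk : 1 ≤ k) : 0 < expMono p k := by
  have := (ofLex p).1.2
  have : (0 : ℝ) < k := by exact_mod_cast hk
  unfold expMono
  positivity

lemma expMono_tendsto {p q : {r : ℝ // 0 < r} ×ₗ ℕ} (h : p < q) :
    Tendsto (fun k => expMono p k / expMono q k) atTop (𝓝 0) := by
  rcases Prod.Lex.lt_iff.1 h with h1 | ⟨h1, h2⟩
  · have hr : (ofLex p).1.1 < (ofLex q).1.1 := h1
    have hp := (ofLex p).1.2
    have hq := (ofLex q).1.2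
    have key : Tendsto (fun k : ℕ => (k : ℝ) ^ (ofLex p).2 *
        ((ofLex p).1.1 / (ofLex q).1.1) ^ k) atTop (𝓝 0) :=
      tendsto_pow_const_mul_const_pow_of_abs_lt_one _ (by
        rw [abs_of_pos (div_pos hp hq)]; exact (div_lt_one hq).2 hr)
    refine squeeze_zero' ?_ ?_ key
    · filter_upwards [eventually_ge_atTop 1] with k hk
      exact (div_pos (expMono_pos p hk) (expMono_pos q hk)).le
    · filter_upwards [eventually_ge_atTop 1] with k hk
      have hk' : (1 : ℝ) ≤ k := by exact_mod_cast hk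
      have h3 : (1 : ℝ) ≤ (k : ℝ) ^ (ofLex q).2 := one_le_pow₀ hk'
      unfold expMono
      rw [div_pow, ← mul_div_assoc, mul_comm ((k : ℝ) ^ (ofLex p).2)]
      refine div_le_div_of_nonneg_left (by positivity) (by positivity) ?_
      exact le_mul_of_one_le_right (by positivity) h3
  · have hq := (ofLex q).1.2
    obtain ⟨d, hd⟩ : ∃ d, (ofLex q).2 = (ofLex p).2 + d + 1 :=
      ⟨(ofLex q).2 - (ofLex p).2 - 1, by omega⟩
    refine squeeze_zero' ?_ ?_ (tendsto_one_div_atTop_nhds_zero_nat (𝕜 := ℝ))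
    · filter_upwards [eventually_ge_atTop 1] with k hk
      exact (div_pos (expMono_pos p hk) (expMono_pos q hk)).le
    · filter_upwards [eventually_ge_atTop 1] with k hk
      have hk' : (1 : ℝ) ≤ k := by exact_mod_cast hk
      have h3 : (1 : ℝ) ≤ (k : ℝ) ^ d := one_le_pow₀ hk'
      have h4 := expMono_pos q hk
      rw [div_le_div_iff₀ h4 (by positivity)]
      unfold expMono
      rw [h1, hd, pow_succ, pow_add, one_mul]
      have : 0 ≤ (ofLex q).1.1 ^ k * (k : ℝ) ^ (ofLex p).2 * k := by positivity
      nlinarith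

/-- A finite family of exponential polynomials, not all identically zero, can be divided by a
single positive function so that every member converges and some limit is nonzero: the divisor is
the largest exponential monomial occurring in the family. -/
theorem exists_leading {σ : Type*} [Fintype σ] (p : σ → ℕ → ℝ) (hp : ∀ i, p i ∈ expPoly)
    (hne : ∃ i k, p i k ≠ 0) :
    ∃ m : ℕ → ℝ, (∀ k, 1 ≤ k → 0 < m k) ∧ ∃ v : σ → ℝ, (∃ i, v i ≠ 0) ∧
      ∀ i, Tendsto (fun k => p i k / m k) atTop (𝓝 (v i)) := by
  classical
  simp only [mem_expPoly_iff, Finsupp.mem_span_range_iff_exists_finsupp] at hp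
  choose c hc using hp
  set s := Finset.univ.biUnion fun i => (c i).support with hs
  have hps : ∀ i k, p i k = ∑ a ∈ s, c i a * expMono a k := by
    intro i k
    rw [← hc i, Finsupp.sum_of_support_subset (s := s)]
    · simp
    · exact Finset.subset_biUnion_of_mem (fun i => (c i).support) (Finset.mem_univ i)
    · simp
  have hsne : s.Nonempty := by
    obtain ⟨i, k, hik⟩ := hne
    rw [hps] at hik
    exact Finset.nonempty_of_sum_ne_zero hik
  set q := s.max' hsne with hq
  refine ⟨expMono q, fun k hk => expMono_pos q hk, fun i => c i q, ?_, fun i => ?_⟩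
  · have := s.max'_mem hsne
    obtain ⟨i, -, hi⟩ := Finset.mem_biUnion.1 this
    exact ⟨i, by simpa using hi⟩
  · have h1 : ∀ a ∈ s, Tendsto (fun k => c i a * (expMono a k / expMono q k)) atTop
        (𝓝 (if a = q then c i a else 0)) := by
      intro a ha
      split_ifs with h
      · subst h
        refine tendsto_const_nhds.congr' ?_
        filter_upwards [eventually_ge_atTop 1] with k hk
        rw [div_self (expMono_pos _ hk).ne', mul_one]
      · simpa using (expMono_tendsto (lt_of_le_of_ne (s.le_max' a ha) h)).const_mul (c i a)
    have h2 := tendsto_finsetSum s h1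
    rw [Finset.sum_ite_eq' s q, if_pos (s.max'_mem hsne)] at h2
    refine h2.congr fun k => ?_
    rw [hps, Finset.sum_div]
    exact Finset.sum_congr rfl fun a _ => (mul_div_assoc _ _ _).symm

lemma choose_mem (j : ℕ) : (fun k : ℕ => (k.choose j : ℝ)) ∈ expPoly := by
  have hid : (fun k : ℕ => (k : ℝ)) ∈ expPoly := by
    simpa using expMono_mem 1 one_pos 1
  have hd : (fun k : ℕ => (k.descFactorial j : ℝ)) ∈ expPoly := by
    induction j with
    | zero => simpa using expMono_mem 1 one_pos 0
    | succ j ih =>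
      have := mul_mem (sub_mem hid (expPoly.algebraMap_mem (j : ℝ))) ih
      convert this using 1
      funext k
      simp only [Nat.descFactorial_succ, Pi.mul_apply, Pi.sub_apply, Nat.cast_mul]
      rcases le_or_gt j k with h | h
      · rw [Nat.cast_sub h]; rfl
      · rw [Nat.descFactorial_of_lt h]; simp
  have := expPoly.smul_mem hd ((j.factorial : ℝ)⁻¹)
  convert this using 1
  funext k
  simp only [Pi.smul_apply, smul_eq_mul, Nat.descFactorial_eq_factorial_mul_choose, Nat.cast_mul]
  rw [inv_mul_cancel_left₀]
  exact_mod_cast j.factorial_ne_zero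

lemma det_mem {n : Type*} [Fintype n] [DecidableEq n] (M : ℕ → Matrix n n ℝ)
    (hM : ∀ i j, (fun k => M k i j) ∈ expPoly) : (fun k => (M k).det) ∈ expPoly := by
  have : (fun k => (M k).det) = ∑ σ : Equiv.Perm n,
      ((Equiv.Perm.sign σ : ℤ) : ℝ) • ∏ i, fun k => M k (σ i) i := by
    funext k
    simp [Matrix.det_apply']
  rw [this]
  exact sum_mem fun σ _ => expPoly.smul_mem (prod_mem fun i _ => hM _ _) _

/-! ### Limits of subspaces -/

lemma exists_minor_ne_zero {ι : Type*} [Fintype ι] {d : ℕ} (M : Matrix ι (Fin d) ℝ)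
    (hM : LinearIndependent ℝ M.col) : ∃ f : Fin d → ι, (M.submatrix f id).det ≠ 0 := by
  have hr : Module.finrank ℝ (Submodule.span ℝ (Set.range M.row)) = d := by
    rw [← Matrix.rank_eq_finrank_span_row, ← Matrix.rank_transpose,
      LinearIndependent.rank_matrix (M := Mᵀ) hM, Fintype.card_fin]
  obtain ⟨g, hg, -, hli⟩ := Submodule.exists_fun_fin_finrank_span_eq ℝ (Set.range M.row)
  choose f hf using hg
  refine ⟨fun i => f (Fin.cast hr.symm i), ?_⟩
  rw [← isUnit_iff_ne_zero, ← Matrix.isUnit_iff_isUnit_det,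
    ← Matrix.linearIndependent_rows_iff_isUnit]
  have := hli.comp (Fin.cast hr.symm) (Fin.cast_injective _)
  have h2 : (M.submatrix (fun i => f (Fin.cast hr.symm i)) id).row = g ∘ Fin.cast hr.symm := by
    funext i
    exact hf _
  rw [h2]
  exact this

/-- Cramer's rule: every coordinate of a vector in the column space of `M` is expressed through the
coordinates picked by `f`, with coefficients that are quotients of maximal minors. -/
lemma cramer_rows {ι : Type*} {d : ℕ} (M : Matrix ι (Fin d) ℝ) (f : Fin d → ι)
    (a : Fin d → ℝ) (i : ι) :
    (M.submatrix f id).det * (M *ᵥ a) i =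
      ∑ j, (M.submatrix (Function.update f j i) id).det * (M *ᵥ a) (f j) := by
  set D := M.submatrix f id with hD
  have h1 : ∀ j, (M.submatrix (Function.update f j i) id).det = (Matrix.vecMul (M i) D.adjugate) j := by
    intro j
    have : M.submatrix (Function.update f j i) id = D.updateRow j (M i) := by
      ext a b
      by_cases h : a = j
      · subst h; simp
      · simp [h, hD]
    rw [this, ← Matrix.cramer_transpose_apply, Matrix.cramer_eq_adjugate_mulVec,
      ← Matrix.adjugate_transpose, Matrix.mulVec_transpose]
  have h2 : ∀ j, (M *ᵥ a) (f j) = (D *ᵥ a) j := fun j => rfl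
  simp only [h1, h2]
  change _ = (Matrix.vecMul (M i) D.adjugate) ⬝ᵥ (D *ᵥ a)
  rw [← Matrix.dotProduct_mulVec, Matrix.mulVec_mulVec, Matrix.adjugate_mul]
  simp [Matrix.smul_mulVec, Matrix.mulVec]

/-- The subspaces `A k E` converge to a subspace `F` of dimension at most `dim E`, in the sense that
limits of points of `A k E` along `k → ∞` lie in `F`. -/
theorem exists_limit {ι : Type*} [Fintype ι] [DecidableEq ι]
    (A : ℕ → (ι → ℝ) →ₗ[ℝ] (ι → ℝ)) (hA0 : A 0 = LinearMap.id)
    (hA : ∀ w i, (fun k => A k w i) ∈ expPoly) (E : Submodule ℝ (ι → ℝ)) :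
    ∃ F : Submodule ℝ (ι → ℝ), Module.finrank ℝ F ≤ Module.finrank ℝ E ∧
      ∀ (κ : ℕ → ℕ) (y : ℕ → ι → ℝ) (z : ι → ℝ), Tendsto κ atTop atTop →
        (∀ j, y j ∈ E.map (A (κ j))) → Tendsto y atTop (𝓝 z) → z ∈ F := by
  set d := Module.finrank ℝ E
  let b : Module.Basis (Fin d) ℝ E := Module.finBasis ℝ E
  let M : ℕ → Matrix ι (Fin d) ℝ := fun k => Matrix.of fun i c => A k (b c) i
  let p : (Fin d → ι) → ℕ → ℝ := fun f k => ((M k).submatrix f id).det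
  have hp : ∀ f, p f ∈ expPoly := fun f => det_mem _ fun i j => hA _ _
  have hM : ∀ k, ∀ x ∈ E.map (A k), ∃ a, M k *ᵥ a = x := by
    rintro k _ ⟨e, he, rfl⟩
    refine ⟨b.repr ⟨e, he⟩, ?_⟩
    have h := congrArg (fun v : E => A k v) (b.sum_repr ⟨e, he⟩)
    simp only [Submodule.coe_sum, Submodule.coe_smul, map_sum, map_smul] at h
    rw [← h]
    funext i
    simp [M, Matrix.mulVec, dotProduct, mul_comm]
  have hne : ∃ f k, p f k ≠ 0 := by
    obtain ⟨f, hf⟩ := exists_minor_ne_zero (M 0) (by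
      have h1 : (M 0).col = fun c => ((b c : E) : ι → ℝ) := by
        funext c i
        simp [M, hA0, Matrix.col]
      rw [h1]
      exact b.linearIndependent.map' E.subtype (Submodule.ker_subtype E))
    exact ⟨f, 0, hf⟩
  obtain ⟨m, hm, v, ⟨f, hf⟩, hv⟩ := exists_leading p hp hne
  -- Near infinity the subspace `A k E` is the graph of `C k` over the coordinates picked by `f`.
  let C : ι → Fin d → ℕ → ℝ := fun i j k => p (Function.update f j i) k / p f k
  let L : Matrix ι (Fin d) ℝ := Matrix.of fun i j => v (Function.update f j i) / v f
  have hC : ∀ i j, Tendsto (C i j) atTop (𝓝 (L i j)) := by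
    intro i j
    refine ((hv (Function.update f j i)).div (hv f) hf).congr' ?_
    filter_upwards [eventually_ge_atTop 1] with k hk
    exact div_div_div_cancel_right₀ (hm k hk).ne' _ _
  have hpf : ∀ᶠ k in atTop, p f k ≠ 0 := by
    filter_upwards [(hv f).eventually_ne hf] with k hk h0
    exact hk (by rw [h0, zero_div])
  refine ⟨LinearMap.range L.mulVecLin, ?_, ?_⟩
  · exact (LinearMap.finrank_range_le _).trans (by simp)
  · intro κ y z hκ hy hyz
    refine ⟨fun j => z (f j), ?_⟩
    funext i
    have hyi : ∀ i, Tendsto (fun n => y n i) atTop (𝓝 (z i)) := fun i =>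
      (tendsto_pi_nhds.1 hyz) i
    have h1 : Tendsto (fun n => ∑ j, C i j (κ n) * y n (f j)) atTop
        (𝓝 (∑ j, L i j * z (f j))) :=
      tendsto_finsetSum _ fun j _ => ((hC i j).comp hκ).mul (hyi (f j))
    refine tendsto_nhds_unique (h1.congr' ?_) (hyi i)
    filter_upwards [hκ.eventually hpf] with n hn
    obtain ⟨a, ha⟩ := hM _ _ (hy n)
    have h2 := cramer_rows (M (κ n)) f a i
    rw [ha] at h2
    have h3 : p f (κ n) * y n i = ∑ j, p (Function.update f j i) (κ n) * y n (f j) := h2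
    rw [eq_comm, ← mul_right_inj' hn, h3, Finset.mul_sum]
    refine Finset.sum_congr rfl fun j _ => ?_
    simp only [C]
    field_simp

theorem exists_closed {ι : Type*} [Fintype ι] [DecidableEq ι]
    (A : ℕ → (ι → ℝ) →ₗ[ℝ] (ι → ℝ)) (hA0 : A 0 = LinearMap.id)
    (hA : ∀ w i, (fun k => A k w i) ∈ expPoly) (E : Submodule ℝ (ι → ℝ)) :
    ∃ F : Submodule ℝ (ι → ℝ), Module.finrank ℝ F ≤ Module.finrank ℝ E ∧
      IsClosed ((⋃ k, (E.map (A k) : Set (ι → ℝ))) ∪ F) := by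
  obtain ⟨F, hF, hlim⟩ := exists_limit A hA0 hA E
  refine ⟨F, hF, isClosed_of_closure_subset fun z hz => ?_⟩
  by_contra hzn
  simp only [Set.mem_union, Set.mem_iUnion, not_or, not_exists] at hzn
  have hcl : ∀ G : Submodule ℝ (ι → ℝ), IsClosed (G : Set (ι → ℝ)) := fun G =>
    G.closed_of_finiteDimensional
  -- `z` avoids every member of the family, hence is a limit of points of arbitrarily late ones.
  have htail : ∀ K : ℕ, z ∈ closure (⋃ k ≥ K, (E.map (A k) : Set (ι → ℝ))) := by
    intro K
    have hsub : ((⋃ k, (E.map (A k) : Set (ι → ℝ))) ∪ F) ⊆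
        ((⋃ k ∈ Set.Iio K, (E.map (A k) : Set (ι → ℝ))) ∪ F) ∪
          ⋃ k ≥ K, (E.map (A k) : Set (ι → ℝ)) := by
      rintro x (hx | hx)
      · obtain ⟨k, hk⟩ := Set.mem_iUnion.1 hx
        rcases lt_or_ge k K with h | h
        · exact Or.inl (Or.inl (Set.mem_biUnion (Set.mem_Iio.2 h) hk))
        · exact Or.inr (Set.mem_biUnion (show k ∈ {k | k ≥ K} from h) hk)
      · exact Or.inl (Or.inr hx)
    have h2 := closure_mono hsub hz
    rw [closure_union, (((Set.finite_Iio K).isClosed_biUnion fun k _ => hcl _).union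
      (hcl F)).closure_eq] at h2
    rcases h2 with (h2 | h2) | h2
    · obtain ⟨k, -, hk⟩ := Set.mem_iUnion₂.1 h2
      exact absurd hk (hzn.1 k)
    · exact absurd h2 hzn.2
    · exact h2
  have hseq : ∀ j : ℕ, ∃ k, j ≤ k ∧ ∃ y ∈ E.map (A k), dist z y < 1 / ((j : ℝ) + 1) := by
    intro j
    obtain ⟨y, hy, hd⟩ := Metric.mem_closure_iff.1 (htail j) (1 / ((j : ℝ) + 1)) (by positivity)
    obtain ⟨k, hk, hyk⟩ := Set.mem_iUnion₂.1 hy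
    exact ⟨k, hk, y, hyk, hd⟩
  choose κ hκ y hy hd using hseq
  refine hzn.2 (hlim κ y z (tendsto_atTop_mono hκ tendsto_id) hy ?_)
  rw [tendsto_iff_dist_tendsto_zero]
  refine squeeze_zero (fun _ => dist_nonneg) (fun j => ?_)
    (tendsto_one_div_add_atTop_nhds_zero_nat (𝕜 := ℝ))
  rw [dist_comm]
  exact (hd j).le

/-! ### Squared moduli -/

/-- The vector of squared moduli of the complex numbers `w (s, 0) + w (s, 1) * I`. -/
noncomputable def sqMod {σ : Type*} (w : σ × Fin 2 → ℝ) : σ → ℝ :=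
  fun s => w (s, 0) ^ 2 + w (s, 1) ^ 2

lemma sqMod_contDiff {σ : Type*} [Fintype σ] : ContDiff ℝ 1 (sqMod (σ := σ)) := by
  unfold sqMod
  fun_prop

/-- Bounded squared moduli force bounded coordinates, so `sqMod` is proper. -/
lemma sqMod_isClosedMap {σ : Type*} [Fintype σ] : IsClosedMap (sqMod (σ := σ)) := by
  have hc : Continuous (sqMod (σ := σ)) := sqMod_contDiff.continuous
  refine IsProperMap.isClosedMap ((isProperMap_iff_isCompact_preimage).2 ⟨hc, fun K hK => ?_⟩)
  obtain ⟨R, hR⟩ := hK.isBounded.exists_norm_le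
  refine Metric.isCompact_of_isClosed_isBounded (hK.isClosed.preimage hc) ?_
  refine isBounded_iff_forall_norm_le.2 ⟨R + 1, fun w hw => ?_⟩
  have h0 := hR _ hw
  have hR0 : 0 ≤ R := (norm_nonneg _).trans h0
  rw [pi_norm_le_iff_of_nonneg (by positivity)]
  rintro ⟨s, b⟩
  have h1 := (norm_le_pi_norm (sqMod w) s).trans h0
  have h2 : sqMod w s ≤ R := (le_abs_self _).trans h1
  have h3 : w (s, b) ^ 2 ≤ R := by
    refine le_trans ?_ h2
    unfold sqMod
    fin_cases b
    · simpa using sq_nonneg (w (s, 1))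
    · simpa using sq_nonneg (w (s, 0))
  rw [Real.norm_eq_abs]
  refine abs_le_of_sq_le_sq ?_ (by positivity)
  nlinarith

lemma dimH_sqMod_image {σ : Type*} [Fintype σ] (G : Submodule ℝ (σ × Fin 2 → ℝ)) :
    dimH (sqMod '' (G : Set (σ × Fin 2 → ℝ))) ≤ Module.finrank ℝ G := by
  have h : sqMod '' (G : Set (σ × Fin 2 → ℝ)) = Set.range fun x : G => sqMod (x : σ × Fin 2 → ℝ) := by
    rw [Set.image_eq_range]; rfl
  rw [h]
  exact (sqMod_contDiff.comp G.subtypeL.contDiff).dimH_range_le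

/-! ### The density obstruction -/

/-- The binomial formula for powers of a Jordan block `lam * (1 + shift)`, where the coordinates are
extended by zero beyond the size `K`. -/
lemma jordan_pow {V : Type*} [AddCommGroup V] [Module ℝ V] (T : V →ₗ[ℝ] V) (lam : ℂ)
    (z : V → ℕ → ℂ) (K : ℕ) (hz0 : ∀ x s, K ≤ s → z x s = 0)
    (hzT : ∀ x s, z (T x) s = lam * (z x s + z x (s + 1))) (n : ℕ) (x : V) (s : ℕ) :
    z ((T ^ n) x) s = lam ^ n * ∑ j ∈ Finset.range K, (n.choose j : ℂ) * z x (s + j) := by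
  have hext : ∀ (s m : ℕ), ∑ j ∈ Finset.range K, (m.choose j : ℂ) * z x (s + j) =
      ∑ j ∈ Finset.range (K + 1), (m.choose j : ℂ) * z x (s + j) := fun s m => by
    rw [Finset.sum_range_succ, hz0 x (s + K) (by omega), mul_zero, add_zero]
  induction n generalizing s with
  | zero =>
    rw [hext, Finset.sum_range_succ']
    simp
  | succ n ih =>
    rw [pow_succ', Module.End.mul_apply, hzT, ih s, ih (s + 1), hext s (n + 1),
      hext s n, Finset.sum_range_succ', Finset.sum_range_succ']
    have h1 : ∑ j ∈ Finset.range K, ((n + 1).choose (j + 1) : ℂ) * z x (s + (j + 1)) =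
        ∑ j ∈ Finset.range K, (n.choose j : ℂ) * z x (s + 1 + j) +
          ∑ j ∈ Finset.range K, (n.choose (j + 1) : ℂ) * z x (s + (j + 1)) := by
      rw [← Finset.sum_add_distrib]
      refine Finset.sum_congr rfl fun j _ => ?_
      rw [Nat.choose_succ_succ, show s + 1 + j = s + (j + 1) by omega]
      push_cast
      ring
    rw [h1]
    simp only [Nat.choose_zero_right]
    ring

/-- The coordinate form of the theorem: `z` collects complex coordinates in which `T` is in Jordan
form, and it attains all real values, so that the squared moduli fill the nonnegative orthant of
`ℝ^(∑ k i)`. -/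
theorem not_dense {V : Type*} [NormedAddCommGroup V] [NormedSpace ℝ V] [FiniteDimensional ℝ V]
    {γ : ℕ} (k : Fin γ → ℕ) (T : V →ₗ[ℝ] V) (lam : Fin γ → ℂ) (hlam : ∀ i, lam i ≠ 0)
    (z : V →ₗ[ℝ] (Fin γ → ℕ → ℂ)) (hz0 : ∀ x i s, k i ≤ s → z x i s = 0)
    (hzT : ∀ x i s, z (T x) i s = lam i * (z x i s + z x i (s + 1)))
    (hsurj : ∀ r : Fin γ → ℕ → ℝ, ∃ x, ∀ i s, s < k i → z x i s = r i s)
    (E : Submodule ℝ V) (hE : Module.finrank ℝ E < ∑ i, k i) :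
    ¬ Dense (⋃ n : ℕ, ⇑(T ^ n) '' (E : Set V)) := by
  intro hD
  let σ := Σ i : Fin γ, Fin (k i)
  let part : Fin 2 → ℂ →ₗ[ℝ] ℝ := ![Complex.reLm, Complex.imLm]
  let Z : V →ₗ[ℝ] (σ × Fin 2 → ℝ) := LinearMap.pi fun q =>
    part q.2 ∘ₗ LinearMap.proj (q.1.2 : ℕ) ∘ₗ LinearMap.proj q.1.1 ∘ₗ z
  let A : ℕ → (σ × Fin 2 → ℝ) →ₗ[ℝ] (σ × Fin 2 → ℝ) := fun n => LinearMap.pi fun q =>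
    ‖lam q.1.1‖ ^ n • ∑ j ∈ Finset.range (k q.1.1), (n.choose j : ℝ) •
      if h : (q.1.2 : ℕ) + j < k q.1.1 then
        LinearMap.proj ((⟨q.1.1, ⟨q.1.2 + j, h⟩⟩ : σ), q.2) else 0
  have hAapp : ∀ n w q, A n w q = ‖lam q.1.1‖ ^ n * ∑ j ∈ Finset.range (k q.1.1),
      (n.choose j : ℝ) * if h : (q.1.2 : ℕ) + j < k q.1.1 then
        w ((⟨q.1.1, ⟨q.1.2 + j, h⟩⟩ : σ), q.2) else 0 := by
    intro n w q
    simp only [A, LinearMap.pi_apply, LinearMap.smul_apply, LinearMap.sum_apply, smul_eq_mul]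
    congr 1
    refine Finset.sum_congr rfl fun j _ => ?_
    split_ifs <;> rfl
  have hZq : ∀ x, sqMod (Z x) = fun q => Complex.normSq (z x q.1 q.2) := by
    intro x
    funext q
    rw [Complex.normSq_apply, ← sq, ← sq]
    rfl
  -- `A n` and `T ^ n` differ, in each coordinate, by the factor `(lam i / ‖lam i‖) ^ n` of modulus
  -- one.
  have hAZ : ∀ n x, sqMod (A n (Z x)) = sqMod (Z ((T ^ n) x)) := by
    intro n x
    rw [hZq]
    funext q
    have hpart : ∀ b, A n (Z x) (q, b) = ‖lam q.1‖ ^ n *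
        part b (∑ j ∈ Finset.range (k q.1), (n.choose j : ℂ) * z x q.1 (q.2 + j)) := by
      intro b
      rw [hAapp, map_sum]
      congr 1
      refine Finset.sum_congr rfl fun j _ => ?_
      have h1 : (n.choose j : ℂ) * z x q.1 (q.2 + j) = (n.choose j : ℝ) • z x q.1 (q.2 + j) := by
        simp
      rw [h1, map_smul, smul_eq_mul]
      congr 1
      split_ifs with h
      · rfl
      · rw [hz0 _ _ _ (not_lt.1 h), map_zero]
    rw [jordan_pow T (lam q.1) (fun x => z x q.1) (k q.1) (fun x s => hz0 x q.1 s)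
      (fun x s => hzT x q.1 s) n x q.2]
    simp only [sqMod, hpart]
    rw [Complex.normSq_mul, map_pow, Complex.normSq_eq_norm_sq (lam q.1), Complex.normSq_apply]
    simp only [part, Matrix.cons_val_zero, Matrix.cons_val_one, Complex.reLm_coe,
      Complex.imLm_coe]
    ring
  have hA0 : A 0 = LinearMap.id := by
    refine LinearMap.ext fun w => funext fun q => ?_
    rw [hAapp]
    have hpos : 0 < k q.1.1 := lt_of_le_of_lt (Nat.zero_le _) q.1.2.isLt
    rw [Finset.sum_eq_single_of_mem 0 (Finset.mem_range.2 hpos)]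
    · simp
    · intro j _ hj
      rw [Nat.choose_eq_zero_of_lt (Nat.pos_of_ne_zero hj)]
      simp
  have hA : ∀ w q, (fun n => A n w q) ∈ expPoly := by
    intro w q
    have h1 : (fun n => A n w q) = (fun n : ℕ => ‖lam q.1.1‖ ^ n * (n : ℝ) ^ 0) *
        ∑ j ∈ Finset.range (k q.1.1), (if h : (q.1.2 : ℕ) + j < k q.1.1 then
        w ((⟨q.1.1, ⟨q.1.2 + j, h⟩⟩ : σ), q.2) else 0) • fun n : ℕ => (n.choose j : ℝ) := by
      funext n
      rw [hAapp]
      simp only [pow_zero, mul_one, Pi.mul_apply, Finset.sum_apply, Pi.smul_apply, smul_eq_mul]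
      congr 1
      exact Finset.sum_congr rfl fun j _ => mul_comm _ _
    rw [h1]
    exact mul_mem (expMono_mem _ (norm_pos_iff.2 (hlam _)) 0)
      (sum_mem fun j _ => expPoly.smul_mem (choose_mem j) _)
  obtain ⟨F, hF, hcl⟩ := exists_closed A hA0 hA (E.map Z)
  have hEZ : Module.finrank ℝ (E.map Z) ≤ Module.finrank ℝ E := Submodule.finrank_map_le Z E
  set Y := (⋃ n, ((E.map Z).map (A n) : Set (σ × Fin 2 → ℝ))) ∪ F with hY
  have hclq : IsClosed (sqMod '' Y) := sqMod_isClosedMap Y hcl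
  have hcont : Continuous fun x => sqMod (Z x) :=
    sqMod_contDiff.continuous.comp Z.continuous_of_finiteDimensional
  have hall : ∀ x, sqMod (Z x) ∈ sqMod '' Y := by
    have : closure (⋃ n : ℕ, ⇑(T ^ n) '' (E : Set V)) ⊆ (fun x => sqMod (Z x)) ⁻¹' (sqMod '' Y) := by
      refine closure_minimal ?_ (hclq.preimage hcont)
      refine Set.iUnion_subset fun n => ?_
      rintro _ ⟨e, he, rfl⟩
      exact ⟨A n (Z e), Or.inl (Set.mem_iUnion.2 ⟨n, ⟨Z e, ⟨e, he, rfl⟩, rfl⟩⟩), hAZ n e⟩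
    intro x
    exact this (hD x)
  have hdim : dimH (sqMod '' Y) < Module.finrank ℝ (σ → ℝ) := by
    have hle : dimH (sqMod '' Y) ≤ (Module.finrank ℝ E : ENNReal) := by
      rw [hY, Set.image_union, Set.image_iUnion, dimH_union, dimH_iUnion]
      refine max_le (iSup_le fun n => ?_) ?_
      · refine (dimH_sqMod_image _).trans ?_
        exact_mod_cast (Submodule.finrank_map_le _ _).trans hEZ
      · refine (dimH_sqMod_image _).trans ?_
        exact_mod_cast hF.trans hEZ
    refine hle.trans_lt ?_
    have : Module.finrank ℝ (σ → ℝ) = ∑ i, k i := by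
      simp [σ]
    rw [this]
    exact_mod_cast hE
  have hopen : IsOpen (Set.pi Set.univ fun _ : σ => Set.Ioi (0 : ℝ)) :=
    isOpen_set_pi Set.finite_univ fun _ _ => isOpen_Ioi
  obtain ⟨r, hr, hr2⟩ := (dense_compl_of_dimH_lt_finrank hdim).inter_open_nonempty _ hopen
    ⟨fun _ => 1, fun _ _ => Set.mem_Ioi.2 one_pos⟩
  -- A point of the open orthant outside the image of `Y` is nevertheless attained by `sqMod ∘ Z`.
  obtain ⟨x, hx⟩ := hsurj fun i s => if h : s < k i then √(r ⟨i, ⟨s, h⟩⟩) else 0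
  refine hr2 ?_
  convert hall x using 1
  rw [hZq]
  funext q
  have hq : 0 ≤ r q := (Set.mem_Ioi.1 (hr q (Set.mem_univ q))).le
  rw [hx q.1 q.2 q.2.isLt, Complex.normSq_ofReal, dif_pos q.2.isLt]
  exact (Real.mul_self_sqrt hq).symm

/-! ### Complex coordinates on a Jordan block -/

lemma sum_band {R : Type*} [AddCommMonoid R] (K s : ℕ) (h : ℕ → R) (hh : ∀ j, K ≤ j → h j = 0) :
    ∑ j ∈ Finset.range K, (if j = s ∨ j = s + 1 then h j else 0) = h s + h (s + 1) := by
  have h1 : ∀ j, (if j = s ∨ j = s + 1 then h j else 0) =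
      (if j = s then h j else 0) + (if j = s + 1 then h j else 0) := by
    intro j
    by_cases h1 : j = s
    · simp [h1]
    · simp [h1]
  simp only [h1, Finset.sum_add_distrib, Finset.sum_ite_eq', Finset.mem_range]
  have h2 : ∀ t, (if t < K then h t else 0) = h t := fun t => by
    split_ifs with ht
    · rfl
    · exact (hh t (not_lt.1 ht)).symm
  rw [h2, h2]

lemma sum_range_two_mul {R : Type*} [AddCommMonoid R] (K : ℕ) (f : ℕ → R) :
    ∑ q ∈ Finset.range (2 * K), f q = ∑ j ∈ Finset.range K, (f (2 * j) + f (2 * j + 1)) := by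
  induction K with
  | zero => simp
  | succ K ih =>
    rw [show 2 * (K + 1) = 2 * K + 1 + 1 by ring, Finset.sum_range_succ, Finset.sum_range_succ, ih,
      Finset.sum_range_succ, add_assoc]

/-- The `s`-th coordinate on `ℝ^n`, read as zero when `s` is out of range. -/
noncomputable def extZ (n s : ℕ) : (Fin n → ℝ) →ₗ[ℝ] ℝ :=
  if h : s < n then LinearMap.proj ⟨s, h⟩ else 0

lemma extZ_of_lt {n s : ℕ} (h : s < n) (u : Fin n → ℝ) : extZ n s u = u ⟨s, h⟩ := by
  simp [extZ, h]

lemma extZ_of_le {n s : ℕ} (h : n ≤ s) (u : Fin n → ℝ) : extZ n s u = 0 := by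
  simp [extZ, not_lt.2 h]

/-- Complex coordinates on a Jordan block: the entries themselves for a classical block, and the
numbers `u (2 * s) + u (2 * s + 1) * I` for a real block, on which `R_θ` acts as `exp (θ * I)`. -/
lemma block_coord (μ : ℝ) (hμ : μ ≠ 0) (o : Option ℝ) (K : ℕ) :
    ∃ (lam : ℂ) (ζ : (Fin (jB μ o K).1 → ℝ) →ₗ[ℝ] (ℕ → ℂ)), lam ≠ 0 ∧
      (∀ u s, K ≤ s → ζ u s = 0) ∧
      (∀ u s, ζ ((jB μ o K).2 *ᵥ u) s = lam * (ζ u s + ζ u (s + 1))) ∧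
      ∀ r : ℕ → ℝ, ∃ u, ∀ s, s < K → ζ u s = r s := by
  cases o with
  | none =>
    change ∃ (lam : ℂ) (ζ : (Fin K → ℝ) →ₗ[ℝ] (ℕ → ℂ)), lam ≠ 0 ∧
      (∀ u s, K ≤ s → ζ u s = 0) ∧
      (∀ u s, ζ ((Matrix.of fun i j : Fin K =>
        if (j : ℕ) = (i : ℕ) ∨ (j : ℕ) = (i : ℕ) + 1 then μ else 0) *ᵥ u) s =
          lam * (ζ u s + ζ u (s + 1))) ∧
      ∀ r : ℕ → ℝ, ∃ u, ∀ s, s < K → ζ u s = r s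
    refine ⟨μ, LinearMap.pi fun s => Complex.ofRealCLM.toLinearMap ∘ₗ extZ K s, by exact_mod_cast hμ,
      fun u s hs => ?_, fun u s => ?_, fun r => ⟨fun i => r i, fun s hs => ?_⟩⟩
    · simp [extZ_of_le hs]
    · rcases lt_or_ge s K with hs | hs
      · have h1 : ((Matrix.of fun i j : Fin K =>
            if (j : ℕ) = (i : ℕ) ∨ (j : ℕ) = (i : ℕ) + 1 then μ else 0) *ᵥ u) ⟨s, hs⟩ =
            μ * (extZ K s u + extZ K (s + 1) u) := by
          rw [← sum_band K s (fun j => extZ K j u) (fun j hj => extZ_of_le hj u), Finset.mul_sum,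
            Finset.sum_range]
          simp only [Matrix.mulVec, dotProduct]
          refine Finset.sum_congr rfl fun j _ => ?_
          simp only [Matrix.of_apply, extZ_of_lt j.isLt]
          split_ifs <;> simp
        simp only [LinearMap.pi_apply, LinearMap.comp_apply]
        rw [extZ_of_lt hs (_ *ᵥ u), h1]
        simp
      · simp [extZ_of_le hs, extZ_of_le (hs.trans (Nat.le_succ s))]
    · simp [extZ_of_lt hs]
  | some θ =>
    change ∃ (lam : ℂ) (ζ : (Fin (2 * K) → ℝ) →ₗ[ℝ] (ℕ → ℂ)), lam ≠ 0 ∧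
      (∀ u s, K ≤ s → ζ u s = 0) ∧
      (∀ u s, ζ ((Matrix.of fun p q : Fin (2 * K) =>
        if (q : ℕ) / 2 = (p : ℕ) / 2 ∨ (q : ℕ) / 2 = (p : ℕ) / 2 + 1 then
          μ * rotM θ ⟨(p : ℕ) % 2, Nat.mod_lt _ (by norm_num)⟩
            ⟨(q : ℕ) % 2, Nat.mod_lt _ (by norm_num)⟩ else 0) *ᵥ u) s =
          lam * (ζ u s + ζ u (s + 1))) ∧
      ∀ r : ℕ → ℝ, ∃ u, ∀ s, s < K → ζ u s = r s
    refine ⟨μ * Complex.exp (θ * Complex.I),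
      LinearMap.pi fun s => Complex.ofRealCLM.toLinearMap ∘ₗ extZ (2 * K) (2 * s) +
        Complex.I • (Complex.ofRealCLM.toLinearMap ∘ₗ extZ (2 * K) (2 * s + 1)),
      mul_ne_zero (by exact_mod_cast hμ) (Complex.exp_ne_zero _),
      fun u s hs => ?_, fun u s => ?_,
      fun r => ⟨fun p => if (p : ℕ) % 2 = 0 then r (p / 2) else 0, fun s hs => ?_⟩⟩
    · simp [extZ_of_le (show 2 * K ≤ 2 * s by omega), extZ_of_le (show 2 * K ≤ 2 * s + 1 by omega)]
    · rcases lt_or_ge s K with hs | hs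
      · have h1 : ∀ (p : Fin (2 * K)) (b : Fin 2), (p : ℕ) = 2 * s + b →
            ((Matrix.of fun p q : Fin (2 * K) =>
            if (q : ℕ) / 2 = (p : ℕ) / 2 ∨ (q : ℕ) / 2 = (p : ℕ) / 2 + 1 then
              μ * rotM θ ⟨(p : ℕ) % 2, Nat.mod_lt _ (by norm_num)⟩
                ⟨(q : ℕ) % 2, Nat.mod_lt _ (by norm_num)⟩ else 0) *ᵥ u) p =
            μ * (rotM θ b 0 * (extZ (2 * K) (2 * s) u + extZ (2 * K) (2 * (s + 1)) u) +
              rotM θ b 1 * (extZ (2 * K) (2 * s + 1) u + extZ (2 * K) (2 * (s + 1) + 1) u)) := by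
          intro p b hp
          have hp2 : (p : ℕ) / 2 = s := by omega
          have hb : (⟨(p : ℕ) % 2, Nat.mod_lt _ (by norm_num)⟩ : Fin 2) = b := by
            ext; simp only; omega
          have h3 := sum_band K s (fun j => μ * rotM θ b 0 * extZ (2 * K) (2 * j) u +
            μ * rotM θ b 1 * extZ (2 * K) (2 * j + 1) u) (fun j hj => by
              rw [extZ_of_le (by omega), extZ_of_le (by omega)]; simp)
          have h4 : ∀ j q : ℕ, q / 2 = j → ∀ c : Fin 2, q % 2 = c →
              (if j = s ∨ j = s + 1 then μ * rotM θ b c * extZ (2 * K) q u else 0) =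
              if q / 2 = s ∨ q / 2 = s + 1 then
                μ * rotM θ b ⟨q % 2, Nat.mod_lt _ (by norm_num)⟩ * extZ (2 * K) q u else 0 := by
            intro j q hj c hc
            have : (⟨q % 2, Nat.mod_lt _ (by norm_num)⟩ : Fin 2) = c := Fin.ext hc
            rw [this, hj]
          have h5 : ∑ j ∈ Finset.range K, (if j = s ∨ j = s + 1 then
              μ * rotM θ b 0 * extZ (2 * K) (2 * j) u +
              μ * rotM θ b 1 * extZ (2 * K) (2 * j + 1) u else 0) =
              ∑ q ∈ Finset.range (2 * K), if q / 2 = s ∨ q / 2 = s + 1 then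
                μ * rotM θ b ⟨q % 2, Nat.mod_lt _ (by norm_num)⟩ * extZ (2 * K) q u else 0 := by
            rw [sum_range_two_mul]
            refine Finset.sum_congr rfl fun j _ => ?_
            rw [← h4 j (2 * j) (by omega) 0 (by simp),
              ← h4 j (2 * j + 1) (by omega) 1 (by simp)]
            split_ifs <;> simp
          have h6 : ((Matrix.of fun p q : Fin (2 * K) =>
            if (q : ℕ) / 2 = (p : ℕ) / 2 ∨ (q : ℕ) / 2 = (p : ℕ) / 2 + 1 then
              μ * rotM θ ⟨(p : ℕ) % 2, Nat.mod_lt _ (by norm_num)⟩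
                ⟨(q : ℕ) % 2, Nat.mod_lt _ (by norm_num)⟩ else 0) *ᵥ u) p =
              ∑ q ∈ Finset.range (2 * K), if q / 2 = s ∨ q / 2 = s + 1 then
                μ * rotM θ b ⟨q % 2, Nat.mod_lt _ (by norm_num)⟩ * extZ (2 * K) q u else 0 := by
            rw [Finset.sum_range]
            simp only [Matrix.mulVec, dotProduct]
            refine Finset.sum_congr rfl fun q _ => ?_
            simp only [Matrix.of_apply, hp2, hb, extZ_of_lt q.isLt]
            split_ifs <;> simp
          rw [h6, ← h5, h3]
          ring
        -- The rows `2 * s` and `2 * s + 1` give the real and imaginary parts of `ζ (J *ᵥ u) s`.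
        have e0 := h1 ⟨2 * s, by omega⟩ 0 (by simp)
        have e1 := h1 ⟨2 * s + 1, by omega⟩ 1 (by simp)
        simp only [LinearMap.pi_apply, LinearMap.add_apply, LinearMap.smul_apply,
          LinearMap.comp_apply]
        rw [extZ_of_lt (show 2 * s < 2 * K by omega), extZ_of_lt (show 2 * s + 1 < 2 * K by omega),
          e0, e1, Complex.exp_mul_I, ← Complex.ofReal_cos, ← Complex.ofReal_sin]
        apply Complex.ext <;> simp [rotM] <;> ring
      · simp [extZ_of_le (show 2 * K ≤ 2 * s by omega),
          extZ_of_le (show 2 * K ≤ 2 * s + 1 by omega),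
          extZ_of_le (show 2 * K ≤ 2 * (s + 1) by omega),
          extZ_of_le (show 2 * K ≤ 2 * (s + 1) + 1 by omega)]
    · simp [extZ_of_lt (show 2 * s < 2 * K by omega), extZ_of_lt (show 2 * s + 1 < 2 * K by omega)]

/-! ### Assembling the blocks -/

theorem stmt9 (N : ℕ) (hN : 2 ≤ N) (γ : ℕ)
    (μ : Fin γ → ℝ) (hμ : ∀ i, μ i ≠ 0)
    (o : Fin γ → Option ℝ) (k : Fin γ → ℕ) (hk : ∀ i, 1 ≤ k i)
    (e : (Σ i : Fin γ, Fin (jB (μ i) (o i) (k i)).1) ≃ Fin N)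
    (T : Matrix (Fin N) (Fin N) ℝ) (P : GL (Fin N) ℝ)
    (hT : T = (P : Matrix (Fin N) (Fin N) ℝ) *
        (Matrix.reindex e e (Matrix.blockDiagonal' fun i => (jB (μ i) (o i) (k i)).2)) *
        ((P⁻¹ : GL (Fin N) ℝ) : Matrix (Fin N) (Fin N) ℝ)) :
    ¬ NSupercyclic ((∑ i, k i) - 1) T.mulVecLin := by

  rintro ⟨E, hE, hD⟩
  choose lam ζ hlam hζ0 hζT hζs using fun i => block_coord (μ i) (hμ i) (o i) (k i)
  -- The change of basis `P⁻¹` is absorbed into the coordinates.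
  let z : (Fin N → ℝ) →ₗ[ℝ] (Fin γ → ℕ → ℂ) := LinearMap.pi fun i =>
    ζ i ∘ₗ LinearMap.funLeft ℝ ℝ (fun p => e ⟨i, p⟩) ∘ₗ
      Matrix.mulVecLin ((P⁻¹ : GL (Fin N) ℝ) : Matrix (Fin N) (Fin N) ℝ)
  have hz : ∀ x i, z x i = ζ i fun p =>
      (((P⁻¹ : GL (Fin N) ℝ) : Matrix (Fin N) (Fin N) ℝ) *ᵥ x) (e ⟨i, p⟩) := fun _ _ => rfl
  have hPP : ((P⁻¹ : GL (Fin N) ℝ) : Matrix (Fin N) (Fin N) ℝ) * (P : Matrix (Fin N) (Fin N) ℝ) = 1 :=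
    P.inv_mul
  refine not_dense k T.mulVecLin lam hlam z (fun x i s hs => hζ0 i _ s hs) (fun x i s => ?_)
    (fun r => ?_) E ?_ hD
  · have h1 : ((P⁻¹ : GL (Fin N) ℝ) : Matrix (Fin N) (Fin N) ℝ) *ᵥ (T *ᵥ x) =
        (Matrix.reindex e e (Matrix.blockDiagonal' fun i => (jB (μ i) (o i) (k i)).2)) *ᵥ
          (((P⁻¹ : GL (Fin N) ℝ) : Matrix (Fin N) (Fin N) ℝ) *ᵥ x) := by
      rw [hT, Matrix.mulVec_mulVec, Matrix.mulVec_mulVec, ← mul_assoc, ← mul_assoc, hPP, one_mul]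
    rw [hz, hz, ← hζT, Matrix.mulVecLin_apply, h1]
    refine congrArg (fun v => ζ i v s) (funext fun p => ?_)
    generalize ((P⁻¹ : GL (Fin N) ℝ) : Matrix (Fin N) (Fin N) ℝ) *ᵥ x = w
    simp only [Matrix.mulVec, dotProduct, Matrix.reindex_apply, Matrix.submatrix_apply]
    rw [← e.sum_comp]
    simp only [Equiv.symm_apply_apply, Fintype.sum_sigma]
    rw [Finset.sum_eq_single_of_mem i (Finset.mem_univ i)]
    · simp [Matrix.blockDiagonal'_apply_eq]
    · intro j _ hj
      refine Finset.sum_eq_zero fun q _ => ?_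
      rw [Matrix.blockDiagonal'_apply_ne _ _ _ hj.symm, zero_mul]
  · choose u hu using fun i => hζs i (r i)
    refine ⟨(P : Matrix (Fin N) (Fin N) ℝ) *ᵥ fun a => u (e.symm a).1 (e.symm a).2,
      fun i s hs => ?_⟩
    rw [hz, Matrix.mulVec_mulVec, hPP, Matrix.one_mulVec]
    rw [← hu i s hs]
    refine congrArg (fun v => ζ i v s) (funext fun p => ?_)
    exact congrArg (fun a : Σ i : Fin γ, Fin (jB (μ i) (o i) (k i)).1 => u a.1 a.2)
      (e.symm_apply_apply ⟨i, p⟩)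
  · have hpos : 0 < ∑ i, k i :=
      lt_of_lt_of_le (hk (e.symm ⟨0, by omega⟩).1)
        (Finset.single_le_sum (f := k) (fun _ _ => Nat.zero_le _) (Finset.mem_univ _))
    omega
end

section
/- Let R = diag(R_{θ₁}, R_{θ₂}) act on ℝ⁴, where {θ₁, θ₂, π} is linearly independent over ℚ. Then a 2-dimensional subspace M of ℝ⁴ is 2-supercyclic for R if and only if M = span{(x₁, x₂, a·y₁, a·y₂), (b·x₁, b·x₂, y₁, y₂)} for some nonzero vectors (x₁,x₂), (y₁,y₂) ∈ ℝ² and real numbers a, b with a·b ≠ 1. -/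
/-!
Identify `ℝ⁴` with `ℂ × ℂ`, so that the operator becomes `(z, w) ↦ (a z, b w)` with
`a = exp (i θ₁)` and `b = exp (i θ₂)`. Since `a * b ≠ 1`, the span in the statement is just
`ℝx ⊕ ℝy`, and the claim is that the orbit of a plane `M` is dense iff `M` meets both coordinate
planes nontrivially.

If `M` meets `ℂ × 0` trivially, then `‖(z, w)‖ ≤ K ‖w‖` on `M` for some `K` (an injective linear
map in finite dimension is bounded below). This closed condition is invariant under the operator,
so the orbit cannot accumulate at `(1, 0)` (`exists_mem_of_dense`); likewise for `0 × ℂ`.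
Conversely, for `M ⊇ ℝx ⊕ ℝy` density follows from Kronecker's theorem: the pairs `(a ^ k, b ^ k)`,
`k ∈ ℕ`, are dense in the product of the two unit circles (`kronecker`).

Kronecker's theorem is proved by averaging. For unit `A = p a ^ k`, `B = q b ^ k`, the average over
`k` of the trigonometric polynomial `(1 + A) ^ (2n) A ^ (-n) (1 + B) ^ (2n) B ^ (-n)` tends to its
constant coefficient `centralBinom n ^ 2 ≥ 16 ^ n / (4 n ^ 2)`. Hence `‖1 + A‖ ^ 2 ‖1 + B‖ ^ 2`
cannot stay below some `c < 16`, i.e. `A` and `B` are simultaneously close to `1` for some `k`.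
-/

open Matrix

open Filter Topology

/-! ### Kronecker's theorem on the 2-torus -/

lemma tendsto_avg_pow {ζ : ℂ} (hζ : ‖ζ‖ = 1) (h1 : ζ ≠ 1) :
    Tendsto (fun N : ℕ => (N : ℂ)⁻¹ * ∑ k ∈ Finset.range N, ζ ^ k) atTop (𝓝 0) := by
  have hb : ∀ N : ℕ, ‖(N : ℂ)⁻¹ * ∑ k ∈ Finset.range N, ζ ^ k‖ ≤ (2 / ‖ζ - 1‖) * (N : ℝ)⁻¹ := by
    intro N
    rw [geom_sum_eq h1, norm_mul, norm_div, norm_inv, Complex.norm_natCast, mul_comm]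
    gcongr
    calc ‖ζ ^ N - 1‖ ≤ ‖ζ ^ N‖ + ‖(1 : ℂ)‖ := norm_sub_le _ _
      _ = 2 := by rw [norm_pow, hζ]; norm_num
  refine squeeze_zero_norm hb ?_
  simpa using (tendsto_inv_atTop_nhds_zero_nat (𝕜 := ℝ)).const_mul (2 / ‖ζ - 1‖)

lemma one_add_pow_mul_zpow {A : ℂ} (hA : A ≠ 0) (n : ℕ) :
    (1 + A) ^ (2 * n) * A ^ (-(n : ℤ)) =
      ∑ j ∈ Finset.range (2 * n + 1), ((2 * n).choose j : ℂ) * A ^ ((j : ℤ) - n) := by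
  rw [add_comm, add_pow, Finset.sum_mul]
  refine Finset.sum_congr rfl fun j _ => ?_
  rw [one_pow, sub_eq_add_neg, zpow_add₀ hA, zpow_natCast]
  ring

lemma tendsto_avg_poly {a b p q : ℂ} (ha : ‖a‖ = 1) (hb : ‖b‖ = 1) (hp : p ≠ 0) (hq : q ≠ 0)
    (hind : ∀ i j : ℤ, a ^ i * b ^ j = 1 → i = 0 ∧ j = 0) (n : ℕ) :
    Tendsto (fun N : ℕ => (N : ℂ)⁻¹ * ∑ k ∈ Finset.range N,
      ((1 + p * a ^ k) ^ (2 * n) * (p * a ^ k) ^ (-(n : ℤ))) *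
      ((1 + q * b ^ k) ^ (2 * n) * (q * b ^ k) ^ (-(n : ℤ)))) atTop
      (𝓝 ((n.centralBinom : ℂ) ^ 2)) := by
  have ha0 : a ≠ 0 := by rintro rfl; simp at ha
  have hb0 : b ≠ 0 := by rintro rfl; simp at hb
  have key : ∀ N : ℕ, (N : ℂ)⁻¹ * ∑ k ∈ Finset.range N,
      ((1 + p * a ^ k) ^ (2 * n) * (p * a ^ k) ^ (-(n : ℤ))) *
      ((1 + q * b ^ k) ^ (2 * n) * (q * b ^ k) ^ (-(n : ℤ))) =
      ∑ j ∈ Finset.range (2 * n + 1), ∑ l ∈ Finset.range (2 * n + 1),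
        ((2 * n).choose j * (2 * n).choose l * p ^ ((j : ℤ) - n) * q ^ ((l : ℤ) - n)) *
        ((N : ℂ)⁻¹ * ∑ k ∈ Finset.range N, (a ^ ((j : ℤ) - n) * b ^ ((l : ℤ) - n)) ^ k) := by
    intro N
    simp_rw [Finset.mul_sum]
    rw [Finset.sum_congr rfl fun k _ => by
      rw [one_add_pow_mul_zpow (mul_ne_zero hp (pow_ne_zero k ha0)),
        one_add_pow_mul_zpow (mul_ne_zero hq (pow_ne_zero k hb0)), Finset.sum_mul_sum,
        Finset.mul_sum]]
    rw [Finset.sum_comm]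
    refine Finset.sum_congr rfl fun j _ => ?_
    simp_rw [Finset.mul_sum]
    rw [Finset.sum_comm]
    refine Finset.sum_congr rfl fun l _ => Finset.sum_congr rfl fun k _ => ?_
    have e : ∀ (z : ℂ) (i : ℤ), (z ^ k) ^ i = (z ^ i) ^ k := fun z i => by
      rw [← zpow_natCast, ← zpow_natCast, zpow_comm]
    rw [mul_zpow, mul_zpow, mul_pow, e, e]
    ring
  simp_rw [key]
  have hlim : (n.centralBinom : ℂ) ^ 2 =
      ∑ j ∈ Finset.range (2 * n + 1), ∑ l ∈ Finset.range (2 * n + 1),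
        ((2 * n).choose j * (2 * n).choose l * p ^ ((j : ℤ) - n) * q ^ ((l : ℤ) - n)) *
        (if j = n ∧ l = n then 1 else 0) := by
    rw [Finset.sum_eq_single n, Finset.sum_eq_single n]
    · simp [Nat.centralBinom, sq]
    · intro l _ hl; simp [hl]
    · intro h; simp at h; omega
    · intro j _ hj; simp [hj]
    · intro h; simp at h; omega
  rw [hlim]
  refine tendsto_finsetSum _ fun j _ => tendsto_finsetSum _ fun l _ => Tendsto.const_mul _ ?_
  split_ifs with h
  · obtain ⟨rfl, rfl⟩ := h
    refine tendsto_const_nhds.congr' ?_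
    filter_upwards [eventually_gt_atTop 0] with N hN
    have : (N : ℂ) ≠ 0 := by exact_mod_cast hN.ne'
    simp [this]
  · refine tendsto_avg_pow (by simp [ha, hb]) fun h1 => h ?_
    obtain ⟨h2, h3⟩ := hind _ _ h1
    omega

/-- The averaging bound behind Kronecker's theorem: the value `16` is the supremum of
`‖1 + A‖ ^ 2 * ‖1 + B‖ ^ 2` over unit `A`, `B`, attained only at `A = B = 1`. -/
lemma exists_large {a b p q : ℂ} (ha : ‖a‖ = 1) (hb : ‖b‖ = 1) (hp : ‖p‖ = 1) (hq : ‖q‖ = 1)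
    (hind : ∀ i j : ℤ, a ^ i * b ^ j = 1 → i = 0 ∧ j = 0) {c : ℝ} (hc : c < 16) :
    ∃ k : ℕ, c < ‖1 + p * a ^ k‖ ^ 2 * ‖1 + q * b ^ k‖ ^ 2 := by
  by_contra! hcon
  have hc0 : 0 ≤ c := le_trans (by positivity) (hcon 0)
  have hp0 : p ≠ 0 := by rintro rfl; simp at hp
  have hq0 : q ≠ 0 := by rintro rfl; simp at hq
  have hbd : ∀ n : ℕ, (n.centralBinom : ℝ) ^ 2 ≤ c ^ n := by
    intro n
    have h := (tendsto_avg_poly ha hb hp0 hq0 hind n).norm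
    rw [norm_pow, Complex.norm_natCast] at h
    refine le_of_tendsto h ?_
    filter_upwards [eventually_gt_atTop 0] with N hN
    have hN' : (0 : ℝ) < N := by exact_mod_cast hN
    rw [norm_mul, norm_inv, Complex.norm_natCast, inv_mul_le_iff₀ hN']
    refine (norm_sum_le _ _).trans ?_
    refine (Finset.sum_le_card_nsmul _ _ (c ^ n) fun k _ => ?_).trans (by simp)
    have := pow_le_pow_left₀ (by positivity) (hcon k) n
    refine le_trans (le_of_eq ?_) this
    simp [ha, hb, hp, hq, mul_pow, pow_mul]
  have hmain : ∀ n : ℕ, 0 < n → (1 : ℝ) ≤ 4 * (n ^ 2 * (c / 16) ^ n) := by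
    intro n hn
    have h1 : (4 : ℝ) ^ n ≤ 2 * n * n.centralBinom := by
      exact_mod_cast Nat.four_pow_le_two_mul_self_mul_centralBinom n hn
    have h2 : (16 : ℝ) ^ n ≤ 4 * n ^ 2 * c ^ n := by
      calc (16 : ℝ) ^ n = (4 ^ n) ^ 2 := by rw [← pow_mul, mul_comm, pow_mul]; norm_num
        _ ≤ (2 * n * n.centralBinom) ^ 2 := by gcongr
        _ = 4 * n ^ 2 * n.centralBinom ^ 2 := by ring
        _ ≤ _ := by gcongr; exact hbd n
    rw [div_pow]
    have : (0 : ℝ) < 16 ^ n := by positivity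
    rw [show (4 : ℝ) * (n ^ 2 * (c ^ n / 16 ^ n)) = 4 * n ^ 2 * c ^ n / 16 ^ n by ring,
      one_le_div this]
    exact h2
  have ht := (tendsto_pow_const_mul_const_pow_of_lt_one 2 (r := c / 16) (by positivity)
    (by rw [div_lt_one (by norm_num)]; exact hc)).const_mul 4
  have := ge_of_tendsto ht (by filter_upwards [eventually_gt_atTop 0] with n hn using hmain n hn)
  norm_num at this

lemma kronecker {a b : ℂ} (ha : ‖a‖ = 1) (hb : ‖b‖ = 1)
    (hind : ∀ i j : ℤ, a ^ i * b ^ j = 1 → i = 0 ∧ j = 0) {u v : ℂ} (hu : ‖u‖ = 1) (hv : ‖v‖ = 1) :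
    (u, v) ∈ closure (Set.range fun k : ℕ => (a ^ k, b ^ k)) := by
  rw [Metric.mem_closure_iff]
  intro ε hε
  obtain ⟨k, hk⟩ := exists_large (p := u⁻¹) (q := v⁻¹) ha hb (by simp [hu]) (by simp [hv]) hind
    (c := 16 - 4 * ε ^ 2) (by nlinarith [sq_pos_of_pos hε])
  refine ⟨_, ⟨k, rfl⟩, ?_⟩
  -- The parallelogram law turns closeness of `‖1 + z / u‖` to `2` into closeness of `z` to `u`.
  have par : ∀ u z : ℂ, ‖u‖ = 1 → ‖z‖ = 1 → ‖1 + u⁻¹ * z‖ ^ 2 = 4 - ‖u - z‖ ^ 2 := by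
    intro u z hu hz
    have hu0 : u ≠ 0 := by rintro rfl; simp at hu
    have e : ‖1 + u⁻¹ * z‖ = ‖u + z‖ := by
      rw [show u + z = u * (1 + u⁻¹ * z) by field_simp, norm_mul, hu, one_mul]
    have := parallelogram_law_with_norm ℝ u z
    rw [e]; rw [hu, hz] at this
    linarith
  have hak : ‖a ^ k‖ = 1 := by simp [ha]
  have hbk : ‖b ^ k‖ = 1 := by simp [hb]
  have h1 := par u _ hu hak
  have h2 := par v _ hv hbk
  rw [h1, h2] at hk
  have p1 : 0 ≤ 4 - ‖u - a ^ k‖ ^ 2 := by rw [← h1]; positivity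
  have p2 : 0 ≤ 4 - ‖v - b ^ k‖ ^ 2 := by rw [← h2]; positivity
  rw [Prod.dist_eq, dist_eq_norm, dist_eq_norm, max_lt_iff]
  constructor
  · refine lt_of_pow_lt_pow_left₀ 2 hε.le ?_
    nlinarith [mul_nonneg p1 (sq_nonneg ‖v - b ^ k‖)]
  · refine lt_of_pow_lt_pow_left₀ 2 hε.le ?_
    nlinarith [mul_nonneg p2 (sq_nonneg ‖u - a ^ k‖)]

/-- Rational independence of `θ₁, θ₂, π` means that the rotations `exp (i θ₁)`, `exp (i θ₂)` are
multiplicatively independent. -/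
lemma mul_indep {θ₁ θ₂ : ℝ} (hθ : LinearIndependent ℚ ![θ₁, θ₂, Real.pi]) (i j : ℤ)
    (h : Complex.exp (θ₁ * Complex.I) ^ i * Complex.exp (θ₂ * Complex.I) ^ j = 1) :
    i = 0 ∧ j = 0 := by
  rw [← Complex.exp_int_mul, ← Complex.exp_int_mul, ← Complex.exp_add,
    Complex.exp_eq_one_iff] at h
  obtain ⟨m, hm⟩ := h
  have hR : (i : ℝ) * θ₁ + j * θ₂ = m * (2 * Real.pi) := by
    have := congrArg Complex.im hm
    simpa using this
  have h3 := Fintype.linearIndependent_iff.1 hθ ![(i : ℚ), (j : ℚ), -2 * (m : ℚ)] (by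
    simp [Fin.sum_univ_three, Rat.smul_def]
    linarith)
  exact ⟨by simpa using h3 0, by simpa using h3 1⟩

/-! ### Planes in `ℂ × ℂ` -/

/-- The diagonal action `(z, w) ↦ (a z, b w)` on `ℂ × ℂ`. -/
def diagMul (a b : ℂ) (p : ℂ × ℂ) : ℂ × ℂ := (a * p.1, b * p.2)

lemma dense_orbit {a b : ℂ} (ha : ‖a‖ = 1) (hb : ‖b‖ = 1)
    (hind : ∀ i j : ℤ, a ^ i * b ^ j = 1 → i = 0 ∧ j = 0) {M : Submodule ℝ (ℂ × ℂ)} {x y : ℂ}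
    (hx : x ≠ 0) (hy : y ≠ 0) (hxM : (x, 0) ∈ M) (hyM : (0, y) ∈ M) :
    Dense (⋃ k : ℕ, diagMul (a ^ k) (b ^ k) '' (M : Set (ℂ × ℂ))) := by
  have polar : ∀ z x : ℂ, x ≠ 0 → ∃ (r : ℝ) (u : ℂ), ‖u‖ = 1 ∧ z = u * (r * x) := by
    intro z x hx
    refine ⟨‖z / x‖, Complex.exp ((z / x).arg * Complex.I), Complex.norm_exp_ofReal_mul_I _, ?_⟩
    rw [← mul_assoc, mul_comm (Complex.exp _), Complex.norm_mul_exp_arg_mul_I]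
    field_simp
  rintro ⟨z, w⟩
  obtain ⟨r, u, hu, rfl⟩ := polar z x hx
  obtain ⟨s, v, hv, rfl⟩ := polar w y hy
  refine map_mem_closure (f := fun p : ℂ × ℂ => (p.1 * (r * x), p.2 * (s * y)))
    (by fun_prop) (kronecker ha hb hind hu hv) ?_
  rintro _ ⟨k, rfl⟩
  refine Set.mem_iUnion.2 ⟨k, (r * x, s * y), ?_, rfl⟩
  have := M.add_mem (M.smul_mem r hxM) (M.smul_mem s hyM)
  simpa using this

/-- If a subspace meets `ker f = 0` trivially, the bound `‖p‖ ≤ K * ‖f p‖` persists on the closure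
of its orbit, so a dense orbit forces `M` to contain a nonzero vector of the kernel of `f`. -/
lemma exists_mem_of_dense {a b : ℂ} (ha : ‖a‖ = 1) (hb : ‖b‖ = 1) (M : Submodule ℝ (ℂ × ℂ))
    (f : ℂ × ℂ →L[ℝ] ℂ) (hf : ∀ c d p, ‖c‖ = 1 → ‖d‖ = 1 → ‖f (diagMul c d p)‖ = ‖f p‖)
    {e : ℂ × ℂ} (he : e ≠ 0) (hfe : f e = 0)
    (hd : Dense (⋃ k : ℕ, diagMul (a ^ k) (b ^ k) '' (M : Set (ℂ × ℂ)))) :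
    ∃ p ∈ M, p ≠ 0 ∧ f p = 0 := by
  by_contra! hcon
  have hinj : LinearMap.ker ((f : ℂ × ℂ →ₗ[ℝ] ℂ) ∘ₗ M.subtype) = ⊥ := by
    rw [LinearMap.ker_eq_bot']
    rintro ⟨p, hp⟩ h0
    by_contra hne
    exact hcon p hp (fun h => hne (Subtype.ext h)) h0
  obtain ⟨K, -, hK⟩ := LinearMap.exists_antilipschitzWith _ hinj
  have hcl : IsClosed {p : ℂ × ℂ | ‖p‖ ≤ K * ‖f p‖} :=
    isClosed_le (by fun_prop) (by fun_prop)
  have hsub : (⋃ k : ℕ, diagMul (a ^ k) (b ^ k) '' (M : Set (ℂ × ℂ))) ⊆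
      {p : ℂ × ℂ | ‖p‖ ≤ K * ‖f p‖} := by
    intro q hq
    obtain ⟨k, p, hp, rfl⟩ := Set.mem_iUnion.1 hq
    have h1 := hK.le_mul_dist ⟨p, hp⟩ 0
    rw [Set.mem_ofPred_eq, hf _ _ _ (by simp [ha]) (by simp [hb])]
    have h2 : ‖diagMul (a ^ k) (b ^ k) p‖ = ‖p‖ := by
      simp [diagMul, Prod.norm_def, ha, hb]
    rw [h2]
    simpa [dist_eq_norm] using h1
  have := hcl.closure_subset_iff.2 hsub (hd e)
  rw [Set.mem_ofPred_eq, hfe, norm_zero, mul_zero] at this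
  exact he (norm_le_zero_iff.1 this)

/-! ### Transfer to `ℝ⁴` -/

/-- The identification of `ℂ × ℂ` with `ℝ⁴`; the second index selects the complex coordinate and
the first one its real or imaginary part. -/
noncomputable def toR4 : (ℂ × ℂ) ≃ₗ[ℝ] (Fin 2 × Fin 2 → ℝ) where
  toFun z := fun p => if p.2 = 0 then ![z.1.re, z.1.im] p.1 else ![z.2.re, z.2.im] p.1
  invFun f := (⟨f (0, 0), f (1, 0)⟩, ⟨f (0, 1), f (1, 1)⟩)
  map_add' z w := by
    ext ⟨i, j⟩
    fin_cases i <;> fin_cases j <;> simp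
  map_smul' r z := by
    ext ⟨i, j⟩
    fin_cases i <;> fin_cases j <;> simp
  left_inv z := by simp
  right_inv f := by
    ext ⟨i, j⟩
    fin_cases i <;> fin_cases j <;> simp

lemma toR4_diagMul (θ₁ θ₂ : ℝ) (z : ℂ × ℂ) :
    (Matrix.blockDiagonal fun i : Fin 2 => rotM (![θ₁, θ₂] i)).mulVecLin (toR4 z) =
      toR4 (diagMul (Complex.exp (θ₁ * Complex.I)) (Complex.exp (θ₂ * Complex.I)) z) := by
  ext ⟨i, j⟩
  fin_cases i <;> fin_cases j <;>
    simp [toR4, diagMul, Matrix.mulVec, dotProduct, Fintype.sum_prod_type, Fin.sum_univ_two,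
      Matrix.blockDiagonal_apply, rotM, Complex.exp_ofReal_mul_I_re,
      Complex.exp_ofReal_mul_I_im] <;> ring

lemma pow_toR4 (θ₁ θ₂ : ℝ) (k : ℕ) (z : ℂ × ℂ) :
    ((Matrix.blockDiagonal fun i : Fin 2 => rotM (![θ₁, θ₂] i)).mulVecLin ^ k) (toR4 z) =
      toR4 (diagMul (Complex.exp (θ₁ * Complex.I) ^ k) (Complex.exp (θ₂ * Complex.I) ^ k) z) := by
  induction k with
  | zero => simp [diagMul]
  | succ k ih =>
    rw [pow_succ', Module.End.mul_apply, ih, toR4_diagMul]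
    simp [diagMul, pow_succ', mul_assoc]

lemma dense_iff_toR4 (θ₁ θ₂ : ℝ) (M : Submodule ℝ (Fin 2 × Fin 2 → ℝ)) :
    Dense (⋃ k : ℕ,
        ⇑((Matrix.blockDiagonal fun i : Fin 2 => rotM (![θ₁, θ₂] i)).mulVecLin ^ k) ''
          (M : Set (Fin 2 × Fin 2 → ℝ))) ↔
    Dense (⋃ k : ℕ, diagMul (Complex.exp (θ₁ * Complex.I) ^ k) (Complex.exp (θ₂ * Complex.I) ^ k) ''
      (M.comap toR4.toLinearMap : Set (ℂ × ℂ))) := by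
  have h : (⋃ k : ℕ,
        ⇑((Matrix.blockDiagonal fun i : Fin 2 => rotM (![θ₁, θ₂] i)).mulVecLin ^ k) ''
          (M : Set (Fin 2 × Fin 2 → ℝ))) =
      toR4.toContinuousLinearEquiv.toHomeomorph '' (⋃ k : ℕ,
        diagMul (Complex.exp (θ₁ * Complex.I) ^ k) (Complex.exp (θ₂ * Complex.I) ^ k) ''
      (M.comap toR4.toLinearMap : Set (ℂ × ℂ))) := by
    rw [Set.image_iUnion]
    refine Set.iUnion_congr fun k => ?_
    ext p
    constructor
    · rintro ⟨m, hm, rfl⟩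
      obtain ⟨z, rfl⟩ := toR4.surjective m
      exact ⟨_, ⟨z, hm, rfl⟩, (pow_toR4 θ₁ θ₂ k z).symm⟩
    · rintro ⟨_, ⟨z, hz, rfl⟩, rfl⟩
      exact ⟨toR4 z, hz, pow_toR4 θ₁ θ₂ k z⟩
  rw [h, toR4.toContinuousLinearEquiv.toHomeomorph.isDenseEmbedding.dense_image]

lemma mk_ne_zero {x : Fin 2 → ℝ} (hx : x ≠ 0) : (⟨x 0, x 1⟩ : ℂ) ≠ 0 := by
  intro h
  apply hx
  ext i
  fin_cases i
  · exact congrArg Complex.re h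
  · exact congrArg Complex.im h

lemma vec_ne_zero {z : ℂ} (hz : z ≠ 0) : (![z.re, z.im] : Fin 2 → ℝ) ≠ 0 := by
  intro h
  exact hz (Complex.ext (congrFun h 0) (congrFun h 1))

/-- A pair of vectors supported on different complex coordinates spans a plane. -/
lemma linearIndependent_axes {z w : ℂ} (hz : z ≠ 0) (hw : w ≠ 0) :
    LinearIndependent ℝ ![toR4 (z, 0), toR4 (0, w)] := by
  rw [LinearIndependent.pair_iff]
  intro s t h
  rw [← map_smul, ← map_smul, ← map_add, LinearEquiv.map_eq_zero_iff, Prod.ext_iff] at h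
  simpa [hz, hw] using h

lemma finrank_span_axes {z w : ℂ} (hz : z ≠ 0) (hw : w ≠ 0) :
    Module.finrank ℝ (Submodule.span ℝ {toR4 (z, 0), toR4 (0, w)}) = 2 := by
  have := finrank_span_eq_card (linearIndependent_axes hz hw)
  rwa [Matrix.range_cons_cons_empty, Fintype.card_fin] at this

/-- When `a * b ≠ 1`, the spanning pair of the theorem is an invertible recombination of the two
axis vectors `(x, 0)` and `(0, y)`. -/
lemma span_eq_axes (x y : Fin 2 → ℝ) {a b : ℝ} (hab : a * b ≠ 1) :
    Submodule.span ℝ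
        ({fun p => if p.2 = 0 then x p.1 else a * y p.1,
          fun p => if p.2 = 0 then b * x p.1 else y p.1} : Set (Fin 2 × Fin 2 → ℝ)) =
    Submodule.span ℝ {toR4 (⟨x 0, x 1⟩, 0), toR4 (0, ⟨y 0, y 1⟩)} := by
  have hd : 1 - a * b ≠ 0 := sub_ne_zero.2 hab.symm
  have hd' : 1 - b * a ≠ 0 := by rwa [mul_comm]
  apply le_antisymm <;> rw [Submodule.span_le] <;>
    rintro _ (rfl | rfl) <;> rw [SetLike.mem_coe, Submodule.mem_span_pair]
  · refine ⟨1, a, ?_⟩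
    ext ⟨i, j⟩
    fin_cases i <;> fin_cases j <;> simp [toR4]
  · refine ⟨b, 1, ?_⟩
    ext ⟨i, j⟩
    fin_cases i <;> fin_cases j <;> simp [toR4]
  · refine ⟨1 / (1 - a * b), -a / (1 - a * b), ?_⟩
    ext ⟨i, j⟩
    fin_cases i <;> fin_cases j <;> simp [toR4] <;> field_simp <;> ring
  · refine ⟨-b / (1 - a * b), 1 / (1 - a * b), ?_⟩
    ext ⟨i, j⟩
    fin_cases i <;> fin_cases j <;> simp [toR4] <;>
      field_simp <;> ring

theorem stmt15 (θ₁ θ₂ : ℝ) (hθ : LinearIndependent ℚ ![θ₁, θ₂, Real.pi])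
    (M : Submodule ℝ (Fin 2 × Fin 2 → ℝ)) :
    (Module.finrank ℝ M = 2 ∧
      Dense (⋃ k : ℕ,
        ⇑((Matrix.blockDiagonal fun i : Fin 2 => rotM (![θ₁, θ₂] i)).mulVecLin ^ k) ''
          (M : Set (Fin 2 × Fin 2 → ℝ)))) ↔
    ∃ (x y : Fin 2 → ℝ) (a b : ℝ), x ≠ 0 ∧ y ≠ 0 ∧ a * b ≠ 1 ∧
      M = Submodule.span ℝ
        ({fun p => if p.2 = 0 then x p.1 else a * y p.1,
          fun p => if p.2 = 0 then b * x p.1 else y p.1} : Set (Fin 2 × Fin 2 → ℝ)) := by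
  have h1 := Complex.norm_exp_ofReal_mul_I θ₁
  have h2 := Complex.norm_exp_ofReal_mul_I θ₂
  rw [dense_iff_toR4]
  constructor
  · rintro ⟨hfr, hd⟩
    obtain ⟨⟨z, z'⟩, hzM, hz, hz'⟩ := exists_mem_of_dense h1 h2 _ (ContinuousLinearMap.snd ℝ ℂ ℂ)
      (by intro c d p hc hd; simp [diagMul, hd]) (e := (1, 0)) (by simp) (by simp) hd
    obtain ⟨⟨w', w⟩, hwM, hw, hw'⟩ := exists_mem_of_dense h1 h2 _ (ContinuousLinearMap.fst ℝ ℂ ℂ)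
      (by intro c d p hc hd; simp [diagMul, hc]) (e := (0, 1)) (by simp) (by simp) hd
    obtain rfl : z' = 0 := hz'
    obtain rfl : w' = 0 := hw'
    have hz0 : z ≠ 0 := by rintro rfl; exact hz rfl
    have hw0 : w ≠ 0 := by rintro rfl; exact hw rfl
    refine ⟨![z.re, z.im], ![w.re, w.im], 0, 0, vec_ne_zero hz0, vec_ne_zero hw0, by simp, ?_⟩
    rw [span_eq_axes _ _ (by simp)]
    refine (Submodule.eq_of_le_of_finrank_eq ?_ ?_).symm
    · rw [Submodule.span_le]
      rintro _ (rfl | rfl)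
      · exact hzM
      · exact hwM
    · rw [hfr]
      exact finrank_span_axes hz0 hw0
  · rintro ⟨x, y, a, b, hx, hy, hab, rfl⟩
    rw [span_eq_axes x y hab]
    refine ⟨finrank_span_axes (mk_ne_zero hx) (mk_ne_zero hy),
      dense_orbit h1 h2 (mul_indep hθ) (mk_ne_zero hx) (mk_ne_zero hy) ?_ ?_⟩
    · exact Submodule.subset_span (Or.inl rfl)
    · exact Submodule.subset_span (Or.inr rfl)
end

section
/- Let A = [[a, −b],[b, a]] and B = [[c, −d],[d, c]] for real numbers a, b, c, d. Then neither the operator [[A, A],[0, A]] nor the block-diagonal operator diag(A, B) on ℝ⁴ is strongly 2-supercyclic. -/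
/-!
Identify `ℝ⁴` with `ℂ²`, so that a pair of vectors is `(z₁, w₁), (z₂, w₂)`. A plane `M` is
recorded, up to a common factor, by the `2 × 2` minors of a basis, and both operators preserve a
ratio of two functions of these minors.

* For `diag(A, B)`, with `A`, `B` multiplication by `α`, `β`, the numbers `u = z₁ w₂ - z₂ w₁` and
  `v = z₁ w̄₂ - z₂ w̄₁` are multiplied by `α β` and `α β̄`, so `|u|² : |v|²` is preserved.
* For `[[A, A], [0, A]]`, both `Re v` and `q = Im (w̄₁ w₂)` are multiplied by `|α|²`, so
  `Re v : q` is preserved.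

The whole orbit of `M` therefore lies in the zero set of a fixed nontrivial combination of the two
functions, which is a proper closed subset of the Grassmannian. This is
`not_stronglyTwoSupercyclic`; the rest is the verification of its hypotheses.
-/

open Matrix

/-- The `n`-th Grassmannian of a topological real vector space `X`, i.e. the set of
`n`-dimensional subspaces, carries the quotient topology coinduced by the span map
from linearly independent `n`-tuples. -/
noncomputable instance grassTopology (X : Type*) [AddCommGroup X] [Module ℝ X]
    [TopologicalSpace X] (n : ℕ) :
    TopologicalSpace {M : Submodule ℝ X // Module.finrank ℝ M = n} :=
  TopologicalSpace.coinduced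
    (fun v : {v : Fin n → X // LinearIndependent ℝ v} =>
      (⟨Submodule.span ℝ (Set.range v.1), by
        rw [finrank_span_eq_card v.2, Fintype.card_fin]⟩ :
        {M : Submodule ℝ X // Module.finrank ℝ M = n}))
    inferInstance

/-- `M` is a strongly `n`-supercyclic subspace for `T`: it is `n`-dimensional, all its
iterates `T^k(M)` are `n`-dimensional, and the orbit `{T^k(M) : k ∈ ℕ}` is dense in the
`n`-th Grassmannian. -/
def SCSubspace {X : Type*} [AddCommGroup X] [Module ℝ X] [TopologicalSpace X]
    (n : ℕ) (T : X →ₗ[ℝ] X) (M : Submodule ℝ X) : Prop :=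
  Module.finrank ℝ M = n ∧ (∀ k : ℕ, Module.finrank ℝ (M.map (T ^ k)) = n) ∧
    Dense {P : {M : Submodule ℝ X // Module.finrank ℝ M = n} |
      ∃ k : ℕ, (P : Submodule ℝ X) = M.map (T ^ k)}

/-- `T` is strongly `n`-supercyclic if it admits a strongly `n`-supercyclic subspace. -/
def StronglyNSupercyclic {X : Type*} [AddCommGroup X] [Module ℝ X] [TopologicalSpace X]
    (n : ℕ) (T : X →ₗ[ℝ] X) : Prop :=
  ∃ M : Submodule ℝ X, SCSubspace n T M

/-- `H x y` is multiplied by the `n`-th power of the determinant under a linear change of the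
pair `(x, y)`. For `n ≠ 0`, whether it vanishes on the bases of a plane depends on the plane
only. -/
def DetCovariant {X : Type*} [AddCommGroup X] [Module ℝ X] (n : ℕ) (H : X → X → ℝ) : Prop :=
  ∀ (p q r s : ℝ) (x y : X),
    H (p • x + q • y) (r • x + s • y) = (p * s - q * r) ^ n * H x y

section

variable {X : Type*} [AddCommGroup X] [Module ℝ X] {n : ℕ} {H : X → X → ℝ}

lemma DetCovariant.linearIndependent (hH : DetCovariant n H) (hn : n ≠ 0) {x y : X}
    (h : H x y ≠ 0) : LinearIndependent ℝ ![x, y] := by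
  rw [LinearIndependent.pair_iff]
  intro p q hpq
  have h0 : ∀ z, H 0 z = 0 := by
    intro z
    have := hH 0 0 0 1 z z
    simpa [hn] using this
  -- completing `(p, q)` by `(-q, p)` gives the determinant `p ^ 2 + q ^ 2`
  have h1 := hH p q (-q) p x y
  rw [hpq, h0] at h1
  have h2 : (p * p - q * -q) ^ n = 0 := by
    rcases mul_eq_zero.1 h1.symm with h3 | h3
    · exact h3
    · exact absurd h3 h
  have h3 : p * p - q * -q = 0 := by simpa [hn] using h2
  constructor <;> nlinarith [mul_self_nonneg p, mul_self_nonneg q]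

lemma DetCovariant.eq_zero_of_mem_span (hH : DetCovariant n H) {x y x' y' : X}
    (h : H x y = 0) (hx : x' ∈ Submodule.span ℝ {x, y}) (hy : y' ∈ Submodule.span ℝ {x, y}) :
    H x' y' = 0 := by
  obtain ⟨p, q, rfl⟩ := Submodule.mem_span_pair.1 hx
  obtain ⟨r, s, rfl⟩ := Submodule.mem_span_pair.1 hy
  rw [hH, h, mul_zero]

/-- The planes on which a continuous covariant function does not vanish form an open set. -/
lemma DetCovariant.isOpen [TopologicalSpace X] (hH : DetCovariant n H)
    (hc : Continuous fun v : X × X => H v.1 v.2) :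
    IsOpen {P : {M : Submodule ℝ X // Module.finrank ℝ M = 2} |
      ∃ x ∈ P.1, ∃ y ∈ P.1, H x y ≠ 0} := by
  rw [isOpen_coinduced]
  have : IsOpen {v : {v : Fin 2 → X // LinearIndependent ℝ v} | H (v.1 0) (v.1 1) ≠ 0} := by
    refine isOpen_ne_fun (hc.comp (f := fun v : {v : Fin 2 → X // LinearIndependent ℝ v} =>
      (v.1 0, v.1 1)) ?_) continuous_const
    exact ((continuous_apply 0).comp continuous_subtype_val).prodMk
      ((continuous_apply 1).comp continuous_subtype_val)
  convert this using 1
  ext v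
  have hr : Set.range v.1 = {v.1 0, v.1 1} := by
    ext z; simp [Fin.exists_fin_two, eq_comm]
  simp only [Set.mem_preimage, Set.mem_ofPred_eq]
  constructor
  · rintro ⟨x, hx, y, hy, h⟩ h0
    rw [hr] at hx hy
    exact h (hH.eq_zero_of_mem_span h0 hx hy)
  · intro h
    exact ⟨_, Submodule.subset_span ⟨0, rfl⟩, _, Submodule.subset_span ⟨1, rfl⟩, h⟩

/-- An operator multiplying two covariant functions by the same factor preserves their ratio, which
confines every orbit of planes to a proper closed subset of the Grassmannian. -/
lemma not_stronglyTwoSupercyclic [TopologicalSpace X] (hn : n ≠ 0) (T : X →ₗ[ℝ] X)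
    {F G : X → X → ℝ} (l : ℝ)
    (hF : DetCovariant n F) (hG : DetCovariant n G)
    (hFc : Continuous fun v : X × X => F v.1 v.2) (hGc : Continuous fun v : X × X => G v.1 v.2)
    (hFT : ∀ x y, F (T x) (T y) = l * F x y) (hGT : ∀ x y, G (T x) (T y) = l * G x y)
    {x₁ y₁ x₂ y₂ : X} (hF₁ : F x₁ y₁ ≠ 0) (hG₁ : G x₁ y₁ = 0)
    (hF₂ : F x₂ y₂ = 0) (hG₂ : G x₂ y₂ ≠ 0) : ¬ StronglyNSupercyclic 2 T := by
  rintro ⟨M, hM, -, hd⟩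
  obtain ⟨x₀, y₀, hspan⟩ : ∃ x₀ y₀ : X, M ≤ Submodule.span ℝ {x₀, y₀} := by
    have : Module.Finite ℝ M := Module.finite_of_finrank_eq_succ hM
    let e := Module.finBasisOfFinrankEq ℝ M hM
    refine ⟨e 0, e 1, fun z hz => Submodule.mem_span_pair.2
      ⟨e.repr ⟨z, hz⟩ 0, e.repr ⟨z, hz⟩ 1, ?_⟩⟩
    have := e.sum_repr ⟨z, hz⟩
    rw [Fin.sum_univ_two] at this
    exact congrArg Subtype.val this
  obtain ⟨c₁, c₂, hc, hc0⟩ : ∃ c₁ c₂ : ℝ, (c₁ ≠ 0 ∨ c₂ ≠ 0) ∧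
      c₁ * F x₀ y₀ + c₂ * G x₀ y₀ = 0 := by
    by_cases h : F x₀ y₀ = 0
    · exact ⟨1, 0, by simp, by simp [h]⟩
    · exact ⟨G x₀ y₀, -F x₀ y₀, by simp [h], by ring⟩
  let H : X → X → ℝ := fun x y => c₁ * F x y + c₂ * G x y
  have hH : DetCovariant n H := by
    intro p q r s x y
    simp only [H]
    rw [hF, hG]
    ring
  have hHc : Continuous fun v : X × X => H v.1 v.2 :=
    (continuous_const.mul hFc).add (continuous_const.mul hGc)
  have hHT : ∀ (k : ℕ) (x y : X), H ((T ^ k) x) ((T ^ k) y) = l ^ k * H x y := by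
    intro k
    induction k with
    | zero => simp
    | succ k ih =>
      intro x y
      rw [pow_succ', Module.End.mul_apply, Module.End.mul_apply]
      have : H (T ((T ^ k) x)) (T ((T ^ k) y)) = l * H ((T ^ k) x) ((T ^ k) y) := by
        simp only [H]
        rw [hFT, hGT]
        ring
      rw [this, ih]
      ring
  obtain ⟨x, y, hxy⟩ : ∃ x y, H x y ≠ 0 := by
    rcases hc with hc | hc
    · exact ⟨x₁, y₁, by simp [H, hG₁, hc, hF₁]⟩
    · exact ⟨x₂, y₂, by simp [H, hF₂, hc, hG₂]⟩
  have hne : {P : {M : Submodule ℝ X // Module.finrank ℝ M = 2} |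
      ∃ x ∈ P.1, ∃ y ∈ P.1, H x y ≠ 0}.Nonempty := by
    refine ⟨⟨Submodule.span ℝ (Set.range ![x, y]), ?_⟩, x, ?_, y, ?_, hxy⟩
    · rw [finrank_span_eq_card (hH.linearIndependent hn hxy), Fintype.card_fin]
    · exact Submodule.subset_span ⟨0, rfl⟩
    · exact Submodule.subset_span ⟨1, rfl⟩
  obtain ⟨P, ⟨x', hx', y', hy', h'⟩, k, hk⟩ := hd.inter_open_nonempty _ (hH.isOpen hHc) hne
  rw [hk] at hx' hy'
  obtain ⟨x', hx', rfl⟩ := hx'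
  obtain ⟨y', hy', rfl⟩ := hy'
  apply h'
  rw [hHT, hH.eq_zero_of_mem_span hc0 (hspan hx') (hspan hy'), mul_zero]

end

/-- The minor of the pair `(x, y)` on the coordinates `i`, `j`. -/
def minor {ι : Type*} (i j : ι) (x y : ι → ℝ) : ℝ := x i * y j - x j * y i

theorem stmt17 (a b c d : ℝ) :
    ¬ StronglyNSupercyclic 2
        (Matrix.fromBlocks !![a, -b; b, a] !![a, -b; b, a] 0 !![a, -b; b, a]).mulVecLin ∧
    ¬ StronglyNSupercyclic 2
        (Matrix.fromBlocks !![a, -b; b, a] 0 0 !![c, -d; d, c]).mulVecLin := by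
  constructor
  -- `F = Re v` and `G = q`
  · refine not_stronglyTwoSupercyclic (n := 1) one_ne_zero _
      (F := fun x y => minor (Sum.inl 0) (Sum.inr 0) x y + minor (Sum.inl 1) (Sum.inr 1) x y)
      (G := fun x y => minor (Sum.inr 0) (Sum.inr 1) x y) (a ^ 2 + b ^ 2)
      (x₁ := Sum.elim ![1, 0] ![0, 0]) (y₁ := Sum.elim ![0, 0] ![1, 0])
      (x₂ := Sum.elim ![0, 0] ![1, 0]) (y₂ := Sum.elim ![0, 0] ![0, 1])
      ?_ ?_ ?_ ?_ ?_ ?_ ?_ ?_ ?_ ?_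
    · intro p q r s x y
      simp [minor]
      ring
    · intro p q r s x y
      simp [minor]
      ring
    · unfold minor
      fun_prop
    · unfold minor
      fun_prop
    · intro x y
      simp [minor, Matrix.mulVec, dotProduct, Fin.sum_univ_two]
      ring
    · intro x y
      simp [minor, Matrix.mulVec, dotProduct, Fin.sum_univ_two]
      ring
    all_goals simp [minor]
  -- `F = |u| ^ 2` and `G = |v| ^ 2`
  · refine not_stronglyTwoSupercyclic (n := 2) two_ne_zero _
      (F := fun x y =>
        (minor (Sum.inl 0) (Sum.inr 0) x y - minor (Sum.inl 1) (Sum.inr 1) x y) ^ 2 +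
        (minor (Sum.inl 0) (Sum.inr 1) x y + minor (Sum.inl 1) (Sum.inr 0) x y) ^ 2)
      (G := fun x y =>
        (minor (Sum.inl 0) (Sum.inr 0) x y + minor (Sum.inl 1) (Sum.inr 1) x y) ^ 2 +
        (minor (Sum.inl 1) (Sum.inr 0) x y - minor (Sum.inl 0) (Sum.inr 1) x y) ^ 2)
      ((a ^ 2 + b ^ 2) * (c ^ 2 + d ^ 2))
      (x₁ := Sum.elim ![1, 0] ![1, 0]) (y₁ := Sum.elim ![0, 1] ![0, -1])
      (x₂ := Sum.elim ![1, 0] ![1, 0]) (y₂ := Sum.elim ![0, 1] ![0, 1])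
      ?_ ?_ ?_ ?_ ?_ ?_ ?_ ?_ ?_ ?_
    · intro p q r s x y
      simp [minor]
      ring
    · intro p q r s x y
      simp [minor]
      ring
    · unfold minor
      fun_prop
    · unfold minor
      fun_prop
    · intro x y
      simp [minor, Matrix.mulVec, dotProduct, Fin.sum_univ_two]
      ring
    · intro x y
      simp [minor, Matrix.mulVec, dotProduct, Fin.sum_univ_two]
      ring
    all_goals norm_num [minor]
end
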